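/- There exist a constant C > 0 and n₀ ∈ ℕ such that for every n ≥ n₀ and every convex body K ⊆ ℝ^n, there exists a positive definite matrix A ∈ ℝ^{n×n} such that the ellipsoid E = {x ∈ ℝ^n : x^T A x ≤ 1} satisfies N(K,E) ≤ C^n and N(E,K) ≤ C^n (i.e., E is an M-ellipsoid of K). -/

import Mathlib

/-!
The ellipsoid is the one given by the covariance matrix of a suitable exponential tilt of the
uniform measure on a symmetrization of `K`.

*Reduction to a symmetric body.* Averaging over `c` gives a point with `|K| ≤ 4ⁿ |K₀|`, where
`K₀ = (K - c) ∩ (c - K)` (`MEll.exists_symBody`). Let `φ` be the logarithm of the Laplace transform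
of the uniform probability measure on `K₀`. Its gradient at `y` is the barycentre of the measure on
`K₀` with density proportional to `exp ⟨x, y⟩`, hence a point of `K₀`, and its Hessian is the
covariance matrix of that measure.

*Volume product.* The inequality `πⁿ ≤ |K₀| ∫ exp (-φ)` (`MEll.SymBody.integral_exp_phi_ge`) plays
the role of the Bourgain-Milman inequality. For `(x, x') ∈ ℝⁿ × ℝⁿ` put `ζ = x + i x'` and
`G(ζ) = ∇φ(x) - i ∇φ(x')`. The integral of `exp (-⟨ζ, G(ζ)⟩ / 2) det (∇²φ(x) + ∇²φ(x'))` does not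
change when `φ` is deformed to `|·|² / 2` through `φₜ = (1 - t)|·|² / 2 + t φ`: the `t`-derivative
of the integrand is a `∂̄`-divergence, by the Piola identity (`MEll.piola`,
`MEll.TameGradient.F'_eq_div`, `MEll.TameGradient.integral_F_one_eq`). For the quadratic potential
the integral is `(4π)ⁿ`. Taking absolute values bounds `(4π)ⁿ` by
`∫∫ exp (-φ((x + x') / 2)) det (∇²φ(x) + ∇²φ(x')) dx dx'`, thanks to the convexity of `φ`. For a
fixed value of `x + x'` the determinant is the Jacobian of `a ↦ ∇φ(a) - ∇φ(x + x' - a)`, an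
injective map into `2K₀`, so that it integrates to at most `2ⁿ |K₀|`.

*The ellipsoid.* As `φ(2y) ≥ 2φ(y)`, one has `∫ exp (-φ) ≤ 2 · 2ⁿ |{φ ≤ 2n}|`. Comparison with
`∫ det ∇²φ ≤ |K₀|` yields `y` with `φ(y) ≤ 2n` and `det ∇²φ(y) ≤ 4 (2/π)ⁿ |K₀|²`
(`MEll.SymBody.exists_tilt`). Let `b = ∇φ(y)` and let `E` be the set where the quadratic form of
`(∇²φ(y))⁻¹` is at most `2n`. The determinant bound controls `|E|`. Markov's inequality puts at
least half of the tilted measure in `b + E`; since its density is at most `exp (4n) / |K₀|`, the set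
`T = K₀ ∩ (b + E)` has volume at least `exp (-4n) |K₀| / 2` (`MEll.SymBody.exists_ellipsoid`).

*Coverings.* Both covering numbers are then bounded by packing translates of `T / 2`
(`MEll.coveringNumber_le`, `MEll.covering_bounds`), with `C = 24 e⁵`.
-/

open MeasureTheory Pointwise
open scoped ENNReal

noncomputable section

abbrev Euc (n : ℕ) := EuclideanSpace ℝ (Fin n)

/-- A convex body: a compact convex set with nonempty interior. -/
def IsConvexBody {n : ℕ} (K : Set (Euc n)) : Prop :=
  Convex ℝ K ∧ IsCompact K ∧ (interior K).Nonempty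

/-- The covering number `N(K,T)`: the least cardinality of a finite set `Λ`
with `K ⊆ Λ + T`.  It is `⊤` if no finite cover exists. -/
def coveringNumber {n : ℕ} (K T : Set (Euc n)) : ℕ∞ :=
  sInf {m : ℕ∞ | ∃ Λ : Finset (Euc n), (Λ.card : ℕ∞) = m ∧ K ⊆ ↑Λ + T}

/-- The ellipsoid `{x : xᵀ A x ≤ 1}` defined by a matrix `A`. -/
def ellipsoid {n : ℕ} (A : Matrix (Fin n) (Fin n) ℝ) : Set (Euc n) :=
  {x | ∑ i, ∑ j, x i * A i j * x j ≤ 1}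

/-! ### Derivatives of determinant and adjugate -/

namespace MEll

section MatrixCalculus

variable {n : ℕ}

/-- The determinant, as a function on arrays; `Fin n → Fin n → ℝ` carries the normed structure
that `Matrix` lacks. -/
def detF (S : Fin n → Fin n → ℝ) : ℝ := (Matrix.of S).det

/-- The adjugate, as a function on arrays. -/
def adjF (S : Fin n → Fin n → ℝ) : Fin n → Fin n → ℝ := fun i j => (Matrix.of S).adjugate i j

lemma contDiff_detF : ContDiff ℝ 1 (detF (n := n)) := by
  unfold detF
  simp only [Matrix.det_apply]
  refine ContDiff.sum fun σ _ => ContDiff.const_smul _ ?_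
  exact contDiff_prod fun i _ => contDiff_apply_apply ℝ ℝ _ _

lemma contDiff_adjF : ContDiff ℝ 1 (adjF (n := n)) := by
  refine contDiff_pi.2 fun i => contDiff_pi.2 fun j => ?_
  simp only [adjF, Matrix.adjugate_apply]
  refine contDiff_detF.comp (f := fun S : Fin n → Fin n → ℝ => fun k l =>
    (Matrix.of S).updateRow j (Pi.single i 1) k l)
    (contDiff_pi.2 fun k => contDiff_pi.2 fun l => ?_)
  by_cases h : k = j
  · subst h; simp only [Matrix.updateRow_self]; exact contDiff_const
  · simp only [Matrix.updateRow_ne h]; exact contDiff_apply_apply ℝ ℝ _ _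

lemma hasFDerivAt_detF (S : Fin n → Fin n → ℝ) : HasFDerivAt detF (fderiv ℝ detF S) S :=
  (contDiff_detF.differentiable (by simp) S).hasFDerivAt

lemma hasFDerivAt_adjF (S : Fin n → Fin n → ℝ) : HasFDerivAt adjF (fderiv ℝ adjF S) S :=
  (contDiff_adjF.differentiable (by simp) S).hasFDerivAt

lemma hasDerivAt_line (S T : Fin n → Fin n → ℝ) : HasDerivAt (fun s : ℝ => S + s • T) T 0 := by
  have := ((hasDerivAt_id (0 : ℝ)).smul_const T).const_add S
  rwa [one_smul] at this

lemma hasDerivAt_detF_line (S T : Fin n → Fin n → ℝ) :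
    HasDerivAt (fun s : ℝ => detF (S + s • T)) (fderiv ℝ detF S T) 0 := by
  have h : HasFDerivAt detF (fderiv ℝ detF S) (S + (0 : ℝ) • T) := by
    rw [zero_smul, add_zero]; exact hasFDerivAt_detF S
  exact h.comp_hasDerivAt (0 : ℝ) (hasDerivAt_line S T)

lemma hasDerivAt_adjF_line (S T : Fin n → Fin n → ℝ) :
    HasDerivAt (fun s : ℝ => adjF (S + s • T)) (fderiv ℝ adjF S T) 0 := by
  have h : HasFDerivAt adjF (fderiv ℝ adjF S) (S + (0 : ℝ) • T) := by
    rw [zero_smul, add_zero]; exact hasFDerivAt_adjF S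
  exact h.comp_hasDerivAt (0 : ℝ) (hasDerivAt_line S T)

/-- Jacobi's formula. -/
lemma fderiv_detF (S T : Fin n → Fin n → ℝ) (hS : detF S ≠ 0) :
    fderiv ℝ detF S T = ∑ j, ∑ k, adjF S j k * T k j := by
  have h1 := hasDerivAt_detF_line S T
  set A : Matrix (Fin n) (Fin n) ℝ := Matrix.of S with hA
  set B : Matrix (Fin n) (Fin n) ℝ := Matrix.of T with hB
  have hu : IsUnit A.det := isUnit_iff_ne_zero.2 hS
  have h2 : HasDerivAt (fun s : ℝ => detF (S + s • T)) (A.det * (A⁻¹ * B).trace) 0 := by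
    have e : (fun s : ℝ => detF (S + s • T)) = fun s : ℝ => A.det *
        (Polynomial.eval s (Matrix.det (1 + (Polynomial.X : Polynomial ℝ) •
          (A⁻¹ * B).map Polynomial.C))) := by
      funext s
      have : Matrix.of (S + s • T) = A * (1 + s • (A⁻¹ * B)) := by
        rw [mul_add, mul_one, Matrix.mul_smul, ← mul_assoc, Matrix.mul_nonsing_inv _ hu, one_mul]
        rfl
      rw [detF, this, Matrix.det_mul]
      congr 1
      rw [← Polynomial.coe_evalRingHom, RingHom.map_det]
      congr 1
      generalize A⁻¹ * B = M
      ext i j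
      by_cases h : i = j <;> simp [h] <;> ring
    rw [e]
    have := (Polynomial.hasDerivAt (Matrix.det (1 + (Polynomial.X : Polynomial ℝ) •
          (A⁻¹ * B).map Polynomial.C)) 0).const_mul A.det
    rwa [Matrix.derivative_det_one_add_X_smul] at this
  rw [h1.unique h2]
  rw [Matrix.inv_def, Ring.inverse_eq_inv', Matrix.smul_mul, Matrix.trace_smul, smul_eq_mul,
    mul_inv_cancel_left₀ (show A.det ≠ 0 from hS)]
  rfl

/-- The derivative of the adjugate at an invertible matrix, from differentiating
`S * adjugate S = det S • 1`. -/
lemma fderiv_adjF (S T : Fin n → Fin n → ℝ) (hS : detF S ≠ 0) (j k : Fin n) :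
    detF S * fderiv ℝ adjF S T j k
      = ∑ l, ∑ m, adjF S l m * T m l * adjF S j k
        - ∑ l, ∑ m, adjF S j m * T m l * adjF S l k := by
  set A : Matrix (Fin n) (Fin n) ℝ := Matrix.of S with hA
  set B : Matrix (Fin n) (Fin n) ℝ := Matrix.of T with hB
  set D : Matrix (Fin n) (Fin n) ℝ := Matrix.of (fderiv ℝ adjF S T) with hD
  have hdet : HasDerivAt (fun s : ℝ => detF (S + s • T)) (A.adjugate * B).trace 0 := by
    have := hasDerivAt_detF_line S T
    rwa [fderiv_detF S T hS] at this
  have hae : ∀ i j, HasDerivAt (fun s : ℝ => adjF (S + s • T) i j) (D i j) 0 := fun i j =>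
    hasDerivAt_pi.1 (hasDerivAt_pi.1 (hasDerivAt_adjF_line S T) i) j
  have hle : ∀ i j, HasDerivAt (fun s : ℝ => (S + s • T) i j) (B i j) 0 := fun i j =>
    hasDerivAt_pi.1 (hasDerivAt_pi.1 (hasDerivAt_line S T) i) j
  have key : B * A.adjugate + A * D = (A.adjugate * B).trace • (1 : Matrix (Fin n) (Fin n) ℝ) := by
    ext i j
    have h1 : HasDerivAt (fun s : ℝ => ∑ k, (S + s • T) i k * adjF (S + s • T) k j)
        (∑ k, (B i k * adjF (S + (0 : ℝ) • T) k j + (S + (0 : ℝ) • T) i k * D k j)) 0 :=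
      HasDerivAt.fun_sum fun k _ => (hle i k).mul (hae k j)
    have h2 : (fun s : ℝ => ∑ k, (S + s • T) i k * adjF (S + s • T) k j)
        = fun s : ℝ => detF (S + s • T) * (1 : Matrix (Fin n) (Fin n) ℝ) i j := by
      funext s
      have := congrFun (congrFun (Matrix.mul_adjugate (Matrix.of (S + s • T))) i) j
      rw [Matrix.mul_apply] at this
      exact this
    rw [h2] at h1
    have h3 := h1.unique (hdet.mul_const _)
    rw [zero_smul, add_zero, Finset.sum_add_distrib] at h3
    rw [Matrix.add_apply, Matrix.mul_apply, Matrix.mul_apply, Matrix.smul_apply, smul_eq_mul]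
    exact h3
  have := congrArg (fun M => A.adjugate * M) key
  simp only [mul_add, ← mul_assoc, Matrix.adjugate_mul, Matrix.mul_smul, mul_one,
    Matrix.smul_mul, one_mul] at this
  have h4 := congrFun (congrFun this j) k
  simp only [Matrix.add_apply, Matrix.smul_apply, smul_eq_mul, Matrix.mul_apply, Matrix.trace,
    Matrix.diag, Finset.sum_mul] at h4
  have h5 : A.det = detF S := rfl
  rw [h5] at h4
  have h6 : detF S * fderiv ℝ adjF S T j k = detF S * D j k := rfl
  rw [h6]
  have h7 : ∀ i j, A.adjugate i j = adjF S i j := fun _ _ => rfl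
  have h8 : ∀ i j, B i j = T i j := fun _ _ => rfl
  simp only [h7, h8] at h4
  linarith

/-- The Piola identity: the cofactor matrix of a Jacobian matrix is divergence free. The matrices
`T j` stand for the partial derivatives of `S`, and their symmetry says that the rows of `S` are
gradients. -/
lemma piola (S : Fin n → Fin n → ℝ) (hS : detF S ≠ 0)
    (T : Fin n → Fin n → Fin n → ℝ) (hT : ∀ j m l, T j m l = T l m j) (k : Fin n) :
    ∑ j, fderiv ℝ adjF S (T j) j k = 0 := by
  have h : detF S * ∑ j, fderiv ℝ adjF S (T j) j k = 0 := by
    rw [Finset.mul_sum, Finset.sum_congr rfl fun j _ => fderiv_adjF S (T j) hS j k,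
      Finset.sum_sub_distrib, sub_eq_zero, Finset.sum_comm]
    refine Finset.sum_congr rfl fun l _ => Finset.sum_congr rfl fun j _ =>
      Finset.sum_congr rfl fun m _ => ?_
    rw [hT j m l]
  exact (mul_eq_zero.1 h).resolve_left hS

end MatrixCalculus

end MEll

namespace MEll

/-! ### Gradient fields and polynomial growth -/

/-- A gradient field `g = ∇φ` on `ℝⁿ`, with the Hessian `A = ∇²φ` and the third derivatives `T`
(`T a j k l` is the derivative of `A a k l` in the direction `j`), all bounded by `M`, where `φ` is
convex. Linear growth of `φ` at infinity enters through `coercive`, a lower bound for `⟨a, ∇φ(a)⟩`.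
The potential `φ` itself is not part of the data. -/
structure TameGradient (n : ℕ) where
  g : Euc n → Fin n → ℝ
  A : Euc n → Fin n → Fin n → ℝ
  T : Euc n → Fin n → Fin n → Fin n → ℝ
  cont_g : Continuous g
  cont_A : Continuous A
  cont_T : Continuous T
  M : ℝ
  bound_g : ∀ a, ‖g a‖ ≤ M
  bound_A : ∀ a, ‖A a‖ ≤ M
  bound_T : ∀ a, ‖T a‖ ≤ M
  deriv_g : ∀ a k v, HasLineDerivAt ℝ (fun x => g x k) (∑ j, A a k j * v j) a v
  deriv_A : ∀ a k l v, HasLineDerivAt ℝ (fun x => A x k l) (∑ j, T a j k l * v j) a v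
  A_symm : ∀ a k l, A a k l = A a l k
  T_symm : ∀ a j m l, T a j m l = T a l m j
  A_psd : ∀ a (v : Fin n → ℝ), 0 ≤ ∑ k, ∑ l, v k * A a k l * v l
  c : ℝ
  C : ℝ
  c_pos : 0 < c
  coercive : ∀ a, c * ‖a‖ - C ≤ ∑ k, a k * g a k

/-- Families of functions on `ℝⁿ × ℝⁿ`, depending on a parameter in `[0,1]`, that are jointly
continuous and grow at most polynomially, uniformly in the parameter. -/
def PolyGrowth {n : ℕ} (f : ℝ × (Euc n × Euc n) → ℂ) : Prop :=
  Continuous f ∧ ∃ C : ℝ, ∃ N : ℕ, 0 ≤ C ∧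
    ∀ t ∈ Set.Icc (0 : ℝ) 1, ∀ x, ‖f (t, x)‖ ≤ C * (1 + ‖x‖) ^ N

namespace PolyGrowth

variable {n : ℕ} {f f' : ℝ × (Euc n × Euc n) → ℂ}

lemma add (h : PolyGrowth f) (h' : PolyGrowth f') : PolyGrowth (fun x => f x + f' x) := by
  obtain ⟨hc, C, N, hC, hb⟩ := h
  obtain ⟨hc', C', N', hC', hb'⟩ := h'
  refine ⟨hc.add hc', C + C', N + N', by positivity, fun t ht x => ?_⟩
  have h1 : (1 : ℝ) ≤ 1 + ‖x‖ := by linarith [norm_nonneg x]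
  calc ‖f (t, x) + f' (t, x)‖ ≤ C * (1 + ‖x‖) ^ N + C' * (1 + ‖x‖) ^ N' :=
        (norm_add_le _ _).trans (add_le_add (hb t ht x) (hb' t ht x))
    _ ≤ C * (1 + ‖x‖) ^ (N + N') + C' * (1 + ‖x‖) ^ (N + N') := by
        gcongr <;> first | exact h1 | omega
    _ = _ := by ring

lemma mul (h : PolyGrowth f) (h' : PolyGrowth f') : PolyGrowth (fun x => f x * f' x) := by
  obtain ⟨hc, C, N, hC, hb⟩ := h
  obtain ⟨hc', C', N', hC', hb'⟩ := h'
  refine ⟨hc.mul hc', C * C', N + N', by positivity, fun t ht x => ?_⟩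
  calc ‖f (t, x) * f' (t, x)‖ ≤ (C * (1 + ‖x‖) ^ N) * (C' * (1 + ‖x‖) ^ N') := by
        rw [norm_mul]
        exact mul_le_mul (hb t ht x) (hb' t ht x) (norm_nonneg _) (by positivity)
    _ = _ := by ring

lemma const (z : ℂ) : PolyGrowth (n := n) (fun _ => z) :=
  ⟨continuous_const, ‖z‖, 0, norm_nonneg _, fun _ _ _ => by simp⟩

lemma sub (h : PolyGrowth f) (h' : PolyGrowth f') : PolyGrowth (fun x => f x - f' x) := by
  have := h.add ((const (-1)).mul h')
  refine (funext fun x => ?_ : (fun x => f x - f' x) = fun x => f x + (-1) * f' x) ▸ this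
  ring

lemma sum {ι : Type*} (s : Finset ι) {f : ι → ℝ × (Euc n × Euc n) → ℂ}
    (h : ∀ i, PolyGrowth (f i)) : PolyGrowth (fun x => ∑ i ∈ s, f i x) := by
  classical
  induction s using Finset.induction_on with
  | empty => simpa using const 0
  | insert a s ha ih => simpa [Finset.sum_insert ha] using (h a).add ih

lemma of_bounded (hc : Continuous f) (C : ℝ)
    (hb : ∀ t ∈ Set.Icc (0 : ℝ) 1, ∀ x, ‖f (t, x)‖ ≤ C) : PolyGrowth f :=
  ⟨hc, max C 0, 0, le_max_right _ _, fun t ht x => by simpa using Or.inl (hb t ht x)⟩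

lemma of_bounded_real {u : ℝ × (Euc n × Euc n) → ℝ} (hc : Continuous u) (C : ℝ)
    (hb : ∀ t ∈ Set.Icc (0 : ℝ) 1, ∀ x, |u (t, x)| ≤ C) : PolyGrowth (fun p => (u p : ℂ)) :=
  of_bounded (Complex.continuous_ofReal.comp hc) C fun t ht x => by
    simpa using hb t ht x

lemma param : PolyGrowth (n := n) (fun p => (p.1 : ℂ)) :=
  of_bounded_real continuous_fst 1 fun t ht x => abs_le.2 ⟨by linarith [ht.1], ht.2⟩

lemma coord_fst (k : Fin n) : PolyGrowth (n := n) (fun p => ((p.2.1 k : ℝ) : ℂ)) := by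
  refine ⟨by fun_prop, 1, 1, zero_le_one, fun t _ x => ?_⟩
  have h1 : ‖x.1 k‖ ≤ ‖x.1‖ := PiLp.norm_apply_le _ _
  have h2 := norm_fst_le x
  simp only [Complex.norm_real, one_mul, pow_one]
  linarith

lemma coord_snd (k : Fin n) : PolyGrowth (n := n) (fun p => ((p.2.2 k : ℝ) : ℂ)) := by
  refine ⟨by fun_prop, 1, 1, zero_le_one, fun t _ x => ?_⟩
  have h1 : ‖x.2 k‖ ≤ ‖x.2‖ := PiLp.norm_apply_le _ _
  have h2 := norm_snd_le x
  simp only [Complex.norm_real, one_mul, pow_one]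
  linarith

end PolyGrowth

/-- Exponential decay beats polynomial growth. -/
lemma exists_exp_mul_pow_le (c : ℝ) (hc : 0 < c) (N : ℕ) :
    ∃ B : ℝ, 0 ≤ B ∧ ∀ r : ℝ, 0 ≤ r → Real.exp (-c * r) * (1 + r) ^ N ≤ B := by
  have h1 : ∀ r : ℝ, 0 ≤ r → (c * (1 + r)) ^ N ≤ N.factorial * Real.exp (c * (1 + r)) := by
    intro r hr
    have := Real.pow_div_factorial_le_exp (c * (1 + r)) (by positivity) N
    rw [div_le_iff₀ (by positivity)] at this
    linarith
  refine ⟨N.factorial * Real.exp c / c ^ N, by positivity, fun r hr => ?_⟩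
  rw [le_div_iff₀ (by positivity)]
  have h2 := h1 r hr
  have h3 : Real.exp (c * (1 + r)) = Real.exp c * Real.exp (c * r) := by
    rw [← Real.exp_add]; ring_nf
  have h4 : Real.exp (-c * r) * Real.exp (c * r) = 1 := by
    rw [← Real.exp_add]; simp
  calc Real.exp (-c * r) * (1 + r) ^ N * c ^ N = Real.exp (-c * r) * (c * (1 + r)) ^ N := by
        rw [mul_pow]; ring
    _ ≤ Real.exp (-c * r) * (N.factorial * Real.exp (c * (1 + r))) := by gcongr
    _ = N.factorial * Real.exp c * (Real.exp (-c * r) * Real.exp (c * r)) := by rw [h3]; ring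
    _ = _ := by rw [h4, mul_one]

/-! ### The deformation to the quadratic potential -/

namespace TameGradient

variable {n : ℕ} (D : TameGradient n)

/-- The complex vector `ζ = x + i x'` attached to a pair `(x, x')`. -/
def zeta (x : Euc n × Euc n) (k : Fin n) : ℂ := (x.1 k : ℂ) + Complex.I * (x.2 k : ℂ)

/-- The gradient of `φₜ = (1 - t)|·|²/2 + t φ`. -/
def p (t : ℝ) (a : Euc n) (k : Fin n) : ℝ := (1 - t) * a k + t * D.g a k

/-- The Hessian of `φₜ`. -/
def Q (t : ℝ) (a : Euc n) : Fin n → Fin n → ℝ :=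
  fun k l => (1 - t) * (if k = l then 1 else 0) + t * D.A a k l

/-- The complex gradient `Gₜ(ζ) = ∇φₜ(x) - i ∇φₜ(x')`. -/
def Gc (t : ℝ) (x : Euc n × Euc n) (k : Fin n) : ℂ :=
  (D.p t x.1 k : ℂ) - Complex.I * (D.p t x.2 k : ℂ)

/-- The sum of Hessians `∇²φₜ(x) + ∇²φₜ(x')`. -/
def S (t : ℝ) (x : Euc n × Euc n) : Fin n → Fin n → ℝ := D.Q t x.1 + D.Q t x.2

/-- The derivative in `t` of the gradient of `φₜ`. -/
def h (a : Euc n) (k : Fin n) : ℝ := D.g a k - a k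

/-- The derivative in `t` of the Hessian of `φₜ`. -/
def hd (a : Euc n) : Fin n → Fin n → ℝ := fun k l => D.A a k l - (if k = l then 1 else 0)

/-- The derivative in `t` of `Gc`. -/
def H (x : Euc n × Euc n) (k : Fin n) : ℂ := (D.h x.1 k : ℂ) - Complex.I * (D.h x.2 k : ℂ)

/-- The weight `exp (-⟨ζ, Gₜ(ζ)⟩ / 2)`. -/
def w (t : ℝ) (x : Euc n × Euc n) : ℂ :=
  Complex.exp (-(1 / 2) * ∑ k, zeta x k * D.Gc t x k)

/-- The integrand whose integral does not depend on `t`. -/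
def F (t : ℝ) (x : Euc n × Euc n) : ℂ := D.w t x * (detF (D.S t x) : ℂ)

/-- The derivative of `F` in `t`. -/
def F' (t : ℝ) (x : Euc n × Euc n) : ℂ :=
  D.w t x * ((-(1 / 2) * ∑ k, zeta x k * D.H x k) * (detF (D.S t x) : ℂ)
    + (fderiv ℝ detF (D.S t x) (D.hd x.1 + D.hd x.2) : ℂ))

/-- The components of the vector field whose `∂̄`-divergence is `F'`. -/
def V (j : Fin n) (t : ℝ) (x : Euc n × Euc n) : ℂ :=
  D.w t x * ∑ k, (adjF (D.S t x) j k : ℂ) * D.H x k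

/-- The derivative of `V j` in the direction `(σ eⱼ, τ eⱼ)`. -/
def V' (j : Fin n) (σ τ : ℝ) (t : ℝ) (x : Euc n × Euc n) : ℂ :=
  D.w t x * ((-(1 / 2) * ∑ k, (((σ * (if k = j then 1 else 0) : ℝ)
      + Complex.I * (τ * (if k = j then 1 else 0) : ℝ)) * D.Gc t x k
      + zeta x k * ((σ * D.Q t x.1 k j : ℝ) - Complex.I * (τ * D.Q t x.2 k j : ℝ))))
      * ∑ k, (adjF (D.S t x) j k : ℂ) * D.H x k
    + ∑ k, ((fderiv ℝ adjF (D.S t x)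
        (σ • t • D.T x.1 j + τ • t • D.T x.2 j) j k : ℂ) * D.H x k
      + (adjF (D.S t x) j k : ℂ)
        * ((σ * D.hd x.1 k j : ℝ) - Complex.I * (τ * D.hd x.2 k j : ℝ))))

/-! ### Growth and continuity of the deformed quantities -/

lemma cont_gk (k : Fin n) : Continuous fun a => D.g a k := (continuous_apply k).comp D.cont_g
lemma cont_Akl (k l : Fin n) : Continuous fun a => D.A a k l :=
  (continuous_apply_apply k l).comp D.cont_A

lemma abs_g_le (a : Euc n) (k : Fin n) : |D.g a k| ≤ D.M :=
  (norm_le_pi_norm (D.g a) k).trans (D.bound_g a)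
lemma abs_A_le (a : Euc n) (k l : Fin n) : |D.A a k l| ≤ D.M :=
  ((norm_le_pi_norm (D.A a k) l).trans (norm_le_pi_norm (D.A a) k)).trans (D.bound_A a)

lemma pg_zeta (k : Fin n) : PolyGrowth fun q => zeta q.2 k :=
  (PolyGrowth.coord_fst k).add ((PolyGrowth.const _).mul (PolyGrowth.coord_snd k))

lemma pg_g1 (k : Fin n) : PolyGrowth fun q => (D.g q.2.1 k : ℂ) :=
  PolyGrowth.of_bounded_real ((D.cont_gk k).comp (by fun_prop)) D.M fun _ _ _ => D.abs_g_le _ _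
lemma pg_g2 (k : Fin n) : PolyGrowth fun q => (D.g q.2.2 k : ℂ) :=
  PolyGrowth.of_bounded_real ((D.cont_gk k).comp (by fun_prop)) D.M fun _ _ _ => D.abs_g_le _ _
lemma pg_A1 (k l : Fin n) : PolyGrowth fun q => (D.A q.2.1 k l : ℂ) :=
  PolyGrowth.of_bounded_real ((D.cont_Akl k l).comp (by fun_prop)) D.M fun _ _ _ => D.abs_A_le _ _ _
lemma pg_A2 (k l : Fin n) : PolyGrowth fun q => (D.A q.2.2 k l : ℂ) :=
  PolyGrowth.of_bounded_real ((D.cont_Akl k l).comp (by fun_prop)) D.M fun _ _ _ => D.abs_A_le _ _ _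

lemma pg_p1 (k : Fin n) : PolyGrowth fun q => (D.p q.1 q.2.1 k : ℂ) := by
  simp only [p, Complex.ofReal_add, Complex.ofReal_mul, Complex.ofReal_sub]
  exact (((PolyGrowth.const _).sub PolyGrowth.param).mul (PolyGrowth.coord_fst k)).add
    (PolyGrowth.param.mul (D.pg_g1 k))
lemma pg_p2 (k : Fin n) : PolyGrowth fun q => (D.p q.1 q.2.2 k : ℂ) := by
  simp only [p, Complex.ofReal_add, Complex.ofReal_mul, Complex.ofReal_sub]
  exact (((PolyGrowth.const _).sub PolyGrowth.param).mul (PolyGrowth.coord_snd k)).add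
    (PolyGrowth.param.mul (D.pg_g2 k))

lemma pg_Q1 (k l : Fin n) : PolyGrowth fun q => (D.Q q.1 q.2.1 k l : ℂ) := by
  simp only [Q, Complex.ofReal_add, Complex.ofReal_mul, Complex.ofReal_sub]
  exact (((PolyGrowth.const _).sub PolyGrowth.param).mul (PolyGrowth.const _)).add
    (PolyGrowth.param.mul (D.pg_A1 k l))
lemma pg_Q2 (k l : Fin n) : PolyGrowth fun q => (D.Q q.1 q.2.2 k l : ℂ) := by
  simp only [Q, Complex.ofReal_add, Complex.ofReal_mul, Complex.ofReal_sub]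
  exact (((PolyGrowth.const _).sub PolyGrowth.param).mul (PolyGrowth.const _)).add
    (PolyGrowth.param.mul (D.pg_A2 k l))

lemma pg_Gc (k : Fin n) : PolyGrowth fun q => D.Gc q.1 q.2 k :=
  (D.pg_p1 k).sub ((PolyGrowth.const _).mul (D.pg_p2 k))

lemma pg_H (k : Fin n) : PolyGrowth fun q => D.H q.2 k := by
  simp only [H, h, Complex.ofReal_sub]
  exact ((D.pg_g1 k).sub (PolyGrowth.coord_fst k)).sub
    ((PolyGrowth.const _).mul ((D.pg_g2 k).sub (PolyGrowth.coord_snd k)))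

lemma pg_hd1 (k l : Fin n) : PolyGrowth fun q => (D.hd q.2.1 k l : ℂ) := by
  simp only [hd, Complex.ofReal_sub]
  exact (D.pg_A1 k l).sub (PolyGrowth.const _)
lemma pg_hd2 (k l : Fin n) : PolyGrowth fun q => (D.hd q.2.2 k l : ℂ) := by
  simp only [hd, Complex.ofReal_sub]
  exact (D.pg_A2 k l).sub (PolyGrowth.const _)

lemma cont_S : Continuous fun q : ℝ × (Euc n × Euc n) => D.S q.1 q.2 := by
  refine continuous_pi fun k => continuous_pi fun l => ?_
  have h1 := (D.cont_Akl k l).comp (continuous_fst.comp continuous_snd :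
    Continuous fun q : ℝ × (Euc n × Euc n) => q.2.1)
  have h2 := (D.cont_Akl k l).comp (continuous_snd.comp continuous_snd :
    Continuous fun q : ℝ × (Euc n × Euc n) => q.2.2)
  simp only [Function.comp_def] at h1 h2
  simp only [S, Q, Pi.add_apply]
  fun_prop

lemma M_nonneg : 0 ≤ D.M := (norm_nonneg _).trans (D.bound_g 0)

lemma norm_Q_le {t : ℝ} (ht : t ∈ Set.Icc (0 : ℝ) 1) (a : Euc n) : ‖D.Q t a‖ ≤ 1 + D.M := by
  have hM := D.M_nonneg
  refine (pi_norm_le_iff_of_nonneg (by positivity)).2 fun k =>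
    (pi_norm_le_iff_of_nonneg (by positivity)).2 fun l => ?_
  have h1 : ‖(1 - t) * (if k = l then (1 : ℝ) else 0)‖ ≤ 1 := by
    rw [norm_mul, Real.norm_eq_abs, abs_of_nonneg (by linarith [ht.2])]
    split_ifs <;> simp [ht.1]
  have h2 : ‖t * D.A a k l‖ ≤ D.M := by
    rw [norm_mul, Real.norm_eq_abs, Real.norm_eq_abs, abs_of_nonneg ht.1]
    have := D.abs_A_le a k l
    have h3 := abs_nonneg (D.A a k l)
    nlinarith [ht.1, ht.2]
  exact (norm_add_le _ _).trans (add_le_add h1 h2)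

lemma norm_S_le {t : ℝ} (ht : t ∈ Set.Icc (0 : ℝ) 1) (x : Euc n × Euc n) :
    ‖D.S t x‖ ≤ 2 * (1 + D.M) := by
  have h1 := D.norm_Q_le ht x.1
  have h2 := D.norm_Q_le ht x.2
  have h3 := norm_add_le (D.Q t x.1) (D.Q t x.2)
  unfold S; linarith

lemma pg_comp_S {f : (Fin n → Fin n → ℝ) → ℝ} (hf : Continuous f) :
    PolyGrowth fun q => (f (D.S q.1 q.2) : ℂ) := by
  obtain ⟨C, hC⟩ := (isCompact_closedBall (0 : Fin n → Fin n → ℝ)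
    (2 * (1 + D.M))).exists_bound_of_continuousOn hf.continuousOn
  exact PolyGrowth.of_bounded_real (hf.comp D.cont_S) C fun t ht x =>
    hC _ (by simpa using D.norm_S_le ht x)

lemma pg_det : PolyGrowth fun q => (detF (D.S q.1 q.2) : ℂ) :=
  D.pg_comp_S contDiff_detF.continuous

lemma pg_adj (j k : Fin n) : PolyGrowth fun q => (adjF (D.S q.1 q.2) j k : ℂ) :=
  D.pg_comp_S (f := fun S => adjF S j k)
    ((continuous_apply_apply j k).comp contDiff_adjF.continuous)

lemma pg_comp_fderiv {f : (Fin n → Fin n → ℝ) → ℝ} (hf : ContDiff ℝ 1 f)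
    {U : ℝ × (Euc n × Euc n) → Fin n → Fin n → ℝ} (hU : Continuous U) (B : ℝ)
    (hB : ∀ t ∈ Set.Icc (0 : ℝ) 1, ∀ x, ‖U (t, x)‖ ≤ B) :
    PolyGrowth fun q => (fderiv ℝ f (D.S q.1 q.2) (U q) : ℂ) := by
  have hc := hf.continuous_fderiv (by simp)
  obtain ⟨C, hC⟩ := (isCompact_closedBall (0 : Fin n → Fin n → ℝ)
    (2 * (1 + D.M))).exists_bound_of_continuousOn hc.continuousOn
  refine PolyGrowth.of_bounded_real ((hc.comp D.cont_S).clm_apply hU) (C * B) fun t ht x => ?_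
  have h1 := hC (D.S t x) (by simpa using D.norm_S_le ht x)
  refine (ContinuousLinearMap.le_opNorm _ _).trans
    (mul_le_mul h1 (hB t ht x) (norm_nonneg _) ((norm_nonneg _).trans h1))

lemma norm_hd_le (a : Euc n) : ‖D.hd a‖ ≤ 1 + D.M := by
  have hM := D.M_nonneg
  refine (pi_norm_le_iff_of_nonneg (by positivity)).2 fun k =>
    (pi_norm_le_iff_of_nonneg (by positivity)).2 fun l => ?_
  have h1 : ‖(if k = l then (1 : ℝ) else 0)‖ ≤ 1 := by split_ifs <;> simp
  have h2 : ‖D.A a k l‖ ≤ D.M := D.abs_A_le a k l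
  have h3 := norm_sub_le (D.A a k l) (if k = l then (1 : ℝ) else 0)
  unfold hd; linarith

lemma cont_hd : Continuous D.hd := by
  refine continuous_pi fun k => continuous_pi fun l => ?_
  exact (D.cont_Akl k l).sub continuous_const

lemma pg_fderiv_det :
    PolyGrowth fun q => (fderiv ℝ detF (D.S q.1 q.2) (D.hd q.2.1 + D.hd q.2.2) : ℂ) := by
  refine D.pg_comp_fderiv contDiff_detF (U := fun q => D.hd q.2.1 + D.hd q.2.2)
    ((D.cont_hd.comp (by fun_prop)).add (D.cont_hd.comp (by fun_prop))) (2 * (1 + D.M))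
    fun t _ x => ?_
  have h1 := D.norm_hd_le x.1
  have h2 := D.norm_hd_le x.2
  have h3 := norm_add_le (D.hd x.1) (D.hd x.2)
  dsimp only; linarith

lemma fderiv_adjF_apply (S T : Fin n → Fin n → ℝ) (j k : Fin n) :
    fderiv ℝ (fun S => adjF S j k) S T = fderiv ℝ adjF S T j k := by
  have := (hasFDerivAt_pi'.1 (hasFDerivAt_pi'.1 (hasFDerivAt_adjF S) j) k).fderiv
  rw [this]; rfl

lemma pg_fderiv_adj (σ τ : ℝ) (j k : Fin n) :
    PolyGrowth fun q => (fderiv ℝ adjF (D.S q.1 q.2)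
        (σ • q.1 • D.T q.2.1 j + τ • q.1 • D.T q.2.2 j) j k : ℂ) := by
  simp only [← fderiv_adjF_apply]
  have hT : Continuous fun a => D.T a j := (continuous_apply j).comp D.cont_T
  refine D.pg_comp_fderiv (f := fun S => adjF S j k)
    (contDiff_pi.1 (contDiff_pi.1 contDiff_adjF j) k)
    (U := fun q => σ • q.1 • D.T q.2.1 j + τ • q.1 • D.T q.2.2 j)
    ?_ (|σ| * D.M + |τ| * D.M) fun t ht x => ?_
  · have h1 := hT.comp (continuous_fst.comp continuous_snd :
      Continuous fun q : ℝ × (Euc n × Euc n) => q.2.1)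
    have h2 := hT.comp (continuous_snd.comp continuous_snd :
      Continuous fun q : ℝ × (Euc n × Euc n) => q.2.2)
    simp only [Function.comp_def] at h1 h2
    fun_prop
  · have hb : ∀ (ρ : ℝ) (a : Euc n), ‖ρ • t • D.T a j‖ ≤ |ρ| * D.M := by
      intro ρ a
      rw [norm_smul, norm_smul, Real.norm_eq_abs, Real.norm_eq_abs, abs_of_nonneg ht.1]
      have h1 := (norm_le_pi_norm (D.T a) j).trans (D.bound_T a)
      gcongr
      have := norm_nonneg (D.T a j)
      nlinarith [ht.1, ht.2]
    exact (norm_add_le _ _).trans (add_le_add (hb _ _) (hb _ _))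

lemma norm_w (t : ℝ) (x : Euc n × Euc n) : ‖D.w t x‖
    = Real.exp (-(1 / 2) * (∑ k, x.1 k * D.p t x.1 k + ∑ k, x.2 k * D.p t x.2 k)) := by
  have : ((-(1 / 2) : ℂ) * ∑ k, zeta x k * D.Gc t x k).re
      = -(1 / 2) * (∑ k, x.1 k * D.p t x.1 k + ∑ k, x.2 k * D.p t x.2 k) := by
    have e : (-(1 / 2) : ℂ) = ((-(1 / 2) : ℝ) : ℂ) := by push_cast; ring
    rw [e, Complex.re_ofReal_mul, Complex.re_sum, ← Finset.sum_add_distrib]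
    simp [zeta, Gc]
  rw [w, Complex.norm_exp, this]

/-- Coercivity of `∇φₜ`, uniform in `t`: on the quadratic part use `c‖a‖ ≤ ‖a‖² + c²`. -/
lemma p_coercive {t : ℝ} (ht : t ∈ Set.Icc (0 : ℝ) 1) (a : Euc n) :
    D.c * ‖a‖ - (D.c ^ 2 + |D.C|) ≤ ∑ k, a k * D.p t a k := by
  have h1 : ∑ k, a k * D.p t a k = (1 - t) * ‖a‖ ^ 2 + t * ∑ k, a k * D.g a k := by
    rw [EuclideanSpace.real_norm_sq_eq, Finset.mul_sum, Finset.mul_sum, ← Finset.sum_add_distrib]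
    exact Finset.sum_congr rfl fun k _ => by unfold p; ring
  rw [h1]
  have h2 := D.coercive a
  have h3 := le_abs_self D.C
  have h4 : D.c * ‖a‖ - D.c ^ 2 ≤ ‖a‖ ^ 2 := by nlinarith [sq_nonneg (‖a‖ - D.c), sq_nonneg (‖a‖)]
  have h5 := abs_nonneg D.C
  have h6 := sq_nonneg D.c
  nlinarith [mul_le_mul_of_nonneg_left h2 ht.1,
    mul_le_mul_of_nonneg_left h4 (sub_nonneg.2 ht.2), mul_le_mul_of_nonneg_left h3 ht.1, ht.1, ht.2,
    mul_nonneg ht.1 h6, mul_nonneg (sub_nonneg.2 ht.2) h5]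

/-- The weight decays exponentially, uniformly in `t`. -/
lemma norm_w_le {t : ℝ} (ht : t ∈ Set.Icc (0 : ℝ) 1) (x : Euc n × Euc n) :
    ‖D.w t x‖ ≤ Real.exp (D.c ^ 2 + |D.C|) * Real.exp (-(D.c / 2) * ‖x‖) := by
  rw [D.norm_w, ← Real.exp_add]
  apply Real.exp_le_exp.2
  have h1 := D.p_coercive ht x.1
  have h2 := D.p_coercive ht x.2
  have h3 : ‖x‖ ≤ ‖x.1‖ + ‖x.2‖ := by
    rw [Prod.norm_def]; exact max_le (by linarith [norm_nonneg x.2]) (by linarith [norm_nonneg x.1])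
  nlinarith [mul_le_mul_of_nonneg_left h3 D.c_pos.le]

lemma cont_w : Continuous fun q : ℝ × (Euc n × Euc n) => D.w q.1 q.2 := by
  have : PolyGrowth fun q => -(1 / 2) * ∑ k, zeta q.2 k * D.Gc q.1 q.2 k :=
    (PolyGrowth.const _).mul (PolyGrowth.sum _ fun k => (pg_zeta k).mul (D.pg_Gc k))
  exact Complex.continuous_exp.comp this.1

/-- The integrable function `(1 + ‖x‖) ^ (-(2n + 1))` on `ℝⁿ × ℝⁿ`, used as a majorant. -/
def dom (n : ℕ) (x : Euc n × Euc n) : ℝ := (1 + ‖x‖) ^ (-((2 * n + 1 : ℕ) : ℝ))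

instance isAddHaarMeasure_volume_prod (n : ℕ) :
    (volume : Measure (Euc n × Euc n)).IsAddHaarMeasure :=
  Measure.prod.instIsAddHaarMeasure volume volume

lemma integrable_dom (n : ℕ) : Integrable (dom n) := by
  refine integrable_one_add_norm ?_
  simp only [Module.finrank_prod, finrank_euclideanSpace, Fintype.card_fin]
  push_cast; linarith

/-- The weight times a function of polynomial growth has an integrable majorant that does not depend
on `t`; this justifies every passage to the limit under the integral sign below. -/
lemma dominated {f : ℝ × (Euc n × Euc n) → ℂ} (hf : PolyGrowth f) :
    ∃ B : ℝ, ∀ t ∈ Set.Icc (0 : ℝ) 1, ∀ x, ‖D.w t x * f (t, x)‖ ≤ B * dom n x := by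
  obtain ⟨hc, C, N, hC, hb⟩ := hf
  obtain ⟨B, hB, h⟩ := exists_exp_mul_pow_le (D.c / 2) (half_pos D.c_pos) (N + (2 * n + 1))
  refine ⟨Real.exp (D.c ^ 2 + |D.C|) * C * B, fun t ht x => ?_⟩
  have hx : 0 < 1 + ‖x‖ := by positivity
  rw [norm_mul, dom, Real.rpow_neg hx.le, Real.rpow_natCast, ← div_eq_mul_inv,
    le_div_iff₀ (by positivity)]
  calc ‖D.w t x‖ * ‖f (t, x)‖ * (1 + ‖x‖) ^ (2 * n + 1)
      ≤ (Real.exp (D.c ^ 2 + |D.C|) * Real.exp (-(D.c / 2) * ‖x‖)) * (C * (1 + ‖x‖) ^ N)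
        * (1 + ‖x‖) ^ (2 * n + 1) := by
        gcongr
        · exact D.norm_w_le ht x
        · exact hb t ht x
    _ = Real.exp (D.c ^ 2 + |D.C|) * C *
        (Real.exp (-(D.c / 2) * ‖x‖) * (1 + ‖x‖) ^ (N + (2 * n + 1))) := by ring
    _ ≤ _ := by gcongr; exact h _ (norm_nonneg _)

lemma cont_mul {f : ℝ × (Euc n × Euc n) → ℂ} (hf : PolyGrowth f) (t : ℝ) :
    Continuous fun x => D.w t x * f (t, x) :=
  (D.cont_w.comp (by fun_prop : Continuous fun x : Euc n × Euc n => (t, x))).mul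
    (hf.1.comp (by fun_prop))

lemma integrable_mul {f : ℝ × (Euc n × Euc n) → ℂ} (hf : PolyGrowth f) {t : ℝ}
    (ht : t ∈ Set.Icc (0 : ℝ) 1) : Integrable fun x => D.w t x * f (t, x) := by
  obtain ⟨B, hB⟩ := D.dominated hf
  exact ((integrable_dom n).const_mul B).mono' (D.cont_mul hf t).aestronglyMeasurable
    (Filter.Eventually.of_forall fun x => hB t ht x)

end TameGradient
end MEll

namespace MEll

/-! ### Invariance of the integral under the deformation -/

namespace TameGradient

variable {n : ℕ} (D : TameGradient n)

lemma pg_V (j : Fin n) : PolyGrowth fun q => ∑ k, (adjF (D.S q.1 q.2) j k : ℂ) * D.H q.2 k :=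
  PolyGrowth.sum _ fun k => (D.pg_adj j k).mul (D.pg_H k)

lemma pg_V' (j : Fin n) (σ τ : ℝ) : PolyGrowth fun q =>
    ((-(1 / 2) * ∑ k, (((σ * (if k = j then 1 else 0) : ℝ)
      + Complex.I * (τ * (if k = j then 1 else 0) : ℝ)) * D.Gc q.1 q.2 k
      + zeta q.2 k * ((σ * D.Q q.1 q.2.1 k j : ℝ) - Complex.I * (τ * D.Q q.1 q.2.2 k j : ℝ))))
      * ∑ k, (adjF (D.S q.1 q.2) j k : ℂ) * D.H q.2 k
    + ∑ k, ((fderiv ℝ adjF (D.S q.1 q.2)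
        (σ • q.1 • D.T q.2.1 j + τ • q.1 • D.T q.2.2 j) j k : ℂ) * D.H q.2 k
      + (adjF (D.S q.1 q.2) j k : ℂ)
        * ((σ * D.hd q.2.1 k j : ℝ) - Complex.I * (τ * D.hd q.2.2 k j : ℝ)))) := by
  refine ((((PolyGrowth.const _).mul (PolyGrowth.sum _ fun k => ?_)).mul (D.pg_V j)).add
    (PolyGrowth.sum _ fun k => ((D.pg_fderiv_adj σ τ j k).mul (D.pg_H k)).add
      ((D.pg_adj j k).mul ?_)))
  · refine ((PolyGrowth.const _).mul (D.pg_Gc k)).add ((pg_zeta k).mul ?_)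
    simp only [Complex.ofReal_mul]
    exact ((PolyGrowth.const _).mul (D.pg_Q1 k j)).sub
      ((PolyGrowth.const _).mul ((PolyGrowth.const _).mul (D.pg_Q2 k j)))
  · simp only [Complex.ofReal_mul]
    exact ((PolyGrowth.const _).mul (D.pg_hd1 k j)).sub
      ((PolyGrowth.const _).mul ((PolyGrowth.const _).mul (D.pg_hd2 k j)))

lemma pg_F' : PolyGrowth fun q => ((-(1 / 2) * ∑ k, zeta q.2 k * D.H q.2 k)
      * (detF (D.S q.1 q.2) : ℂ)
    + (fderiv ℝ detF (D.S q.1 q.2) (D.hd q.2.1 + D.hd q.2.2) : ℂ)) :=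
  (((PolyGrowth.const _).mul (PolyGrowth.sum _ fun k => (pg_zeta k).mul (D.pg_H k))).mul
    D.pg_det).add D.pg_fderiv_det

/-- The direction `(σ eⱼ, τ eⱼ)` in `ℝⁿ × ℝⁿ`; the pairs `(1, 0)` and `(0, 1)` for `(σ, τ)` give the
two partial derivatives that make up `∂/∂ζ̄ⱼ`. -/
def dir (j : Fin n) (σ τ : ℝ) : Euc n × Euc n :=
  (σ • EuclideanSpace.single j 1, τ • EuclideanSpace.single j 1)

lemma line_coord (a : Euc n) (j k : Fin n) (σ : ℝ) :
    HasDerivAt (fun s : ℝ => (a + s • σ • EuclideanSpace.single j (1 : ℝ)) k)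
      (σ * (if k = j then 1 else 0)) 0 := by
  have h := ((hasDerivAt_id (0 : ℝ)).mul_const (σ * (if k = j then (1 : ℝ) else 0))).const_add (a k)
  rw [one_mul] at h
  refine h.congr_of_eventuallyEq (Filter.Eventually.of_forall fun s => ?_)
  simp

lemma sum_single (f : Fin n → ℝ) (j : Fin n) (σ : ℝ) :
    ∑ i, f i * (σ • EuclideanSpace.single j (1 : ℝ) : Euc n) i = σ * f j := by
  simp [mul_comm]

lemma line_g (a : Euc n) (j k : Fin n) (σ : ℝ) :
    HasDerivAt (fun s : ℝ => D.g (a + s • σ • EuclideanSpace.single j (1 : ℝ)) k)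
      (σ * D.A a k j) 0 := by
  have h := D.deriv_g a k (σ • EuclideanSpace.single j 1)
  rw [sum_single] at h
  exact h

lemma line_A (a : Euc n) (j k l : Fin n) (σ : ℝ) :
    HasDerivAt (fun s : ℝ => D.A (a + s • σ • EuclideanSpace.single j (1 : ℝ)) k l)
      (σ * D.T a j k l) 0 := by
  have h := D.deriv_A a k l (σ • EuclideanSpace.single j 1)
  rw [sum_single (fun j => D.T a j k l)] at h
  exact h

lemma line_p (t : ℝ) (a : Euc n) (j k : Fin n) (σ : ℝ) :
    HasDerivAt (fun s : ℝ => D.p t (a + s • σ • EuclideanSpace.single j (1 : ℝ)) k)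
      (σ * D.Q t a k j) 0 := by
  refine (((line_coord a j k σ).const_mul (1 - t)).add ((D.line_g a j k σ).const_mul t)).congr_deriv
    ?_
  unfold Q; ring

lemma line_h (a : Euc n) (j k : Fin n) (σ : ℝ) :
    HasDerivAt (fun s : ℝ => D.h (a + s • σ • EuclideanSpace.single j (1 : ℝ)) k)
      (σ * D.hd a k j) 0 := by
  refine ((D.line_g a j k σ).sub (line_coord a j k σ)).congr_deriv ?_
  unfold hd; ring

lemma line_Q (t : ℝ) (a : Euc n) (j : Fin n) (σ : ℝ) :
    HasDerivAt (fun s : ℝ => D.Q t (a + s • σ • EuclideanSpace.single j (1 : ℝ)))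
      (σ • t • D.T a j) 0 := by
  refine hasDerivAt_pi.2 fun k => hasDerivAt_pi.2 fun l => ?_
  refine (((D.line_A a j k l σ).const_mul t).const_add _).congr_deriv ?_
  simp only [Pi.smul_apply, smul_eq_mul]; ring

lemma line_V (j : Fin n) (σ τ t : ℝ) (x : Euc n × Euc n) :
    HasLineDerivAt ℝ (D.V j t) (D.V' j σ τ t x) x (dir j σ τ) := by
  have x0 : x + (0 : ℝ) • dir j σ τ = x := by simp
  have hz : ∀ k, HasDerivAt (fun s : ℝ => zeta (x + s • dir j σ τ) k)
      ((σ * (if k = j then 1 else 0) : ℝ) + Complex.I * (τ * (if k = j then 1 else 0) : ℝ)) 0 :=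
    fun k => (line_coord x.1 j k σ).ofReal_comp.add
      ((line_coord x.2 j k τ).ofReal_comp.const_mul _)
  have hG : ∀ k, HasDerivAt (fun s : ℝ => D.Gc t (x + s • dir j σ τ) k)
      ((σ * D.Q t x.1 k j : ℝ) - Complex.I * (τ * D.Q t x.2 k j : ℝ)) 0 :=
    fun k => (D.line_p t x.1 j k σ).ofReal_comp.sub
      ((D.line_p t x.2 j k τ).ofReal_comp.const_mul _)
  have hH : ∀ k, HasDerivAt (fun s : ℝ => D.H (x + s • dir j σ τ) k)
      ((σ * D.hd x.1 k j : ℝ) - Complex.I * (τ * D.hd x.2 k j : ℝ)) 0 :=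
    fun k => (D.line_h x.1 j k σ).ofReal_comp.sub
      ((D.line_h x.2 j k τ).ofReal_comp.const_mul _)
  have hS : HasDerivAt (fun s : ℝ => D.S t (x + s • dir j σ τ))
      (σ • t • D.T x.1 j + τ • t • D.T x.2 j) 0 := (D.line_Q t x.1 j σ).add (D.line_Q t x.2 j τ)
  have hadj : ∀ k, HasDerivAt (fun s : ℝ => ((adjF (D.S t (x + s • dir j σ τ)) j k : ℝ) : ℂ))
      (fderiv ℝ adjF (D.S t x) (σ • t • D.T x.1 j + τ • t • D.T x.2 j) j k : ℝ) 0 := by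
    intro k
    have h := (hasFDerivAt_adjF (D.S t (x + (0 : ℝ) • dir j σ τ))).comp_hasDerivAt (0 : ℝ) hS
    rw [x0] at h
    exact (hasDerivAt_pi.1 (hasDerivAt_pi.1 h j) k).ofReal_comp
  have hw : HasDerivAt (fun s : ℝ => D.w t (x + s • dir j σ τ))
      (D.w t x * (-(1 / 2) * ∑ k, (((σ * (if k = j then 1 else 0) : ℝ)
      + Complex.I * (τ * (if k = j then 1 else 0) : ℝ)) * D.Gc t x k
      + zeta x k * ((σ * D.Q t x.1 k j : ℝ) - Complex.I * (τ * D.Q t x.2 k j : ℝ))))) 0 := by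
    have h := ((HasDerivAt.fun_sum (u := Finset.univ) fun k _ => (hz k).fun_mul (hG k)).const_mul
      (-(1 / 2) : ℂ)).cexp
    simp only [x0] at h
    exact h
  have h := hw.fun_mul (HasDerivAt.fun_sum (u := Finset.univ) fun k _ => (hadj k).fun_mul (hH k))
  simp only [x0] at h
  refine HasDerivAt.congr_deriv (f := fun s : ℝ => D.V j t (x + s • dir j σ τ)) h ?_
  unfold V'; ring

lemma deriv_F (t : ℝ) (x : Euc n × Euc n) : HasDerivAt (fun t => D.F t x) (D.F' t x) t := by
  have hp : ∀ a k, HasDerivAt (fun t => D.p t a k) (D.h a k) t := fun a k => by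
    refine ((((hasDerivAt_id t).const_sub 1).mul_const (a k)).add
      ((hasDerivAt_id t).mul_const (D.g a k))).congr_deriv ?_
    unfold h; ring
  have hG : ∀ k, HasDerivAt (fun t => D.Gc t x k) (D.H x k) t := fun k =>
    (hp x.1 k).ofReal_comp.sub ((hp x.2 k).ofReal_comp.const_mul _)
  have hQ : ∀ a, HasDerivAt (fun t => D.Q t a) (D.hd a) t := fun a =>
    hasDerivAt_pi.2 fun k => hasDerivAt_pi.2 fun l => by
      refine ((((hasDerivAt_id t).const_sub 1).mul_const _).add
        ((hasDerivAt_id t).mul_const (D.A a k l))).congr_deriv ?_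
      unfold hd; ring
  have hS : HasDerivAt (fun t => D.S t x) (D.hd x.1 + D.hd x.2) t := (hQ x.1).add (hQ x.2)
  have hdet := ((hasFDerivAt_detF (D.S t x)).comp_hasDerivAt t hS).ofReal_comp
  have hw : HasDerivAt (fun t => D.w t x)
      (D.w t x * (-(1 / 2) * ∑ k, zeta x k * D.H x k)) t :=
    ((HasDerivAt.fun_sum (u := Finset.univ) fun k _ => (hG k).const_mul (zeta x k)).const_mul
      (-(1 / 2) : ℂ)).cexp
  refine (hw.mul hdet).congr_deriv ?_
  simp only [F', Function.comp]; ring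

lemma detF_pos {t : ℝ} (ht : t ∈ Set.Ico (0 : ℝ) 1) (x : Euc n × Euc n) : 0 < detF (D.S t x) := by
  have hpd : (Matrix.of (D.S t x)).PosDef := by
    refine Matrix.PosDef.of_dotProduct_mulVec_pos ?_ fun v hv => ?_
    · ext k l
      simp only [Matrix.conjTranspose_apply, Matrix.of_apply, S, Q, Pi.add_apply, star_trivial,
        D.A_symm _ l k, eq_comm (a := l) (b := k)]
    · have e : dotProduct (star v) (Matrix.mulVec (Matrix.of (D.S t x)) v)
          = 2 * (1 - t) * ∑ k, v k ^ 2 + t * (∑ k, ∑ l, v k * D.A x.1 k l * v l)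
            + t * (∑ k, ∑ l, v k * D.A x.2 k l * v l) := by
        simp only [dotProduct, Matrix.mulVec, Finset.mul_sum, ← Finset.sum_add_distrib]
        refine Finset.sum_congr rfl fun k _ => ?_
        have : 2 * (1 - t) * v k ^ 2 = ∑ l, 2 * (1 - t) * (if k = l then v k * v l else 0) := by
          simp [pow_two]
        rw [this, ← Finset.sum_add_distrib, ← Finset.sum_add_distrib]
        refine Finset.sum_congr rfl fun l _ => ?_
        simp only [Matrix.of_apply, S, Q, Pi.add_apply, Pi.star_apply, star_trivial]
        split_ifs <;> ring
      rw [e]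
      have h1 := mul_nonneg ht.1 (D.A_psd x.1 v)
      have h2 := mul_nonneg ht.1 (D.A_psd x.2 v)
      have h3 : 0 < ∑ k, v k ^ 2 := by
        obtain ⟨k, hk⟩ := Function.ne_iff.1 hv
        exact Finset.sum_pos' (fun _ _ => sq_nonneg _) ⟨k, Finset.mem_univ _, by
          have : v k ≠ 0 := hk
          positivity⟩
      have h4 : 0 < 1 - t := by linarith [ht.2]
      positivity
  exact hpd.det_pos

lemma S_symm (t : ℝ) (x : Euc n × Euc n) (k l : Fin n) : D.S t x k l = D.S t x l k := by
  simp only [S, Q, Pi.add_apply, D.A_symm _ l k, eq_comm (a := l) (b := k)]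

/-- The `t`-derivative of the integrand is the `∂̄`-divergence of the vector field `V`. The endpoint
`t = 1` is excluded because `A` is only assumed positive semidefinite, and the Piola identity is
used at an invertible matrix. -/
lemma F'_eq_div {t : ℝ} (ht : t ∈ Set.Ico (0 : ℝ) 1) (x : Euc n × Euc n) :
    D.F' t x = ∑ j, (D.V' j 1 0 t x + Complex.I * D.V' j 0 1 t x) := by
  have hdet : detF (D.S t x) ≠ 0 := (D.detF_pos ht x).ne'
  -- the derivatives of the adjugate drop out by the Piola identity
  have hpiola : ∀ a k, ∑ j, (fderiv ℝ adjF (D.S t x) (t • D.T a j) j k : ℂ) = 0 := by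
    intro a k
    have := piola (D.S t x) hdet (fun j => t • D.T a j) (fun j m l => by
      simp only [Pi.smul_apply, D.T_symm a j m l]) k
    exact_mod_cast this
  have hterm : ∀ j, D.V' j 1 0 t x + Complex.I * D.V' j 0 1 t x
      = D.w t x * ((-(1 / 2) * ∑ k, zeta x k * (D.S t x k j : ℂ))
          * ∑ k, (adjF (D.S t x) j k : ℂ) * D.H x k
        + ∑ k, (adjF (D.S t x) j k : ℂ) * ((D.hd x.1 k j + D.hd x.2 k j : ℝ) : ℂ)
        + ∑ k, (fderiv ℝ adjF (D.S t x) (t • D.T x.1 j) j k : ℂ) * D.H x k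
        + Complex.I * ∑ k, (fderiv ℝ adjF (D.S t x) (t • D.T x.2 j) j k : ℂ) * D.H x k) := by
    intro j
    simp only [V', one_smul, zero_smul, add_zero, zero_add, one_mul, zero_mul, Complex.ofReal_zero,
      mul_zero, sub_zero, zero_sub]
    have e1 : ∑ k, zeta x k * (D.S t x k j : ℂ)
        = ∑ k, (((if k = j then (1 : ℝ) else 0 : ℝ) : ℂ) * D.Gc t x k
            + zeta x k * (D.Q t x.1 k j : ℂ))
          + Complex.I * ∑ k, (Complex.I * ((if k = j then (1 : ℝ) else 0 : ℝ) : ℂ) * D.Gc t x k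
            + zeta x k * -(Complex.I * (D.Q t x.2 k j : ℂ))) := by
      rw [Finset.mul_sum, ← Finset.sum_add_distrib]
      refine Finset.sum_congr rfl fun k _ => ?_
      simp only [S, Pi.add_apply, Complex.ofReal_add]
      linear_combination (-((if k = j then (1 : ℝ) else 0 : ℝ) : ℂ) * D.Gc t x k
        + zeta x k * (D.Q t x.2 k j : ℂ)) * Complex.I_sq
    have e2 : ∑ k, (adjF (D.S t x) j k : ℂ) * ((D.hd x.1 k j + D.hd x.2 k j : ℝ) : ℂ)
        = ∑ k, (adjF (D.S t x) j k : ℂ) * (D.hd x.1 k j : ℂ)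
          + Complex.I * ∑ k, (adjF (D.S t x) j k : ℂ) * -(Complex.I * (D.hd x.2 k j : ℂ)) := by
      rw [Finset.mul_sum, ← Finset.sum_add_distrib]
      refine Finset.sum_congr rfl fun k _ => ?_
      simp only [Complex.ofReal_add]
      linear_combination ((adjF (D.S t x) j k : ℂ) * (D.hd x.2 k j : ℂ)) * Complex.I_sq
    rw [e1, e2]
    simp only [Finset.sum_add_distrib]
    ring
  rw [Finset.sum_congr rfl fun j _ => hterm j, ← Finset.mul_sum, F']
  congr 1
  simp only [Finset.sum_add_distrib]
  have z1 : ∀ a, ∑ j, ∑ k, (fderiv ℝ adjF (D.S t x) (t • D.T a j) j k : ℂ) * D.H x k = 0 := by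
    intro a
    rw [Finset.sum_comm]
    refine Finset.sum_eq_zero fun k _ => ?_
    rw [← Finset.sum_mul, hpiola, zero_mul]
  rw [z1, ← Finset.mul_sum, z1, mul_zero, add_zero, add_zero, fderiv_detF _ _ hdet]
  congr 1
  -- the derivative of the weight, contracted with the adjugate, gives back the determinant
  · have hmul : ∀ k m, ∑ j, (D.S t x k j : ℂ) * (adjF (D.S t x) j m : ℂ)
        = if k = m then (detF (D.S t x) : ℂ) else 0 := by
      intro k m
      have := congrFun (congrFun (Matrix.mul_adjugate (Matrix.of (D.S t x))) k) m
      rw [Matrix.mul_apply, Matrix.smul_apply, Matrix.one_apply] at this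
      have h2 : ∑ j, D.S t x k j * adjF (D.S t x) j m = if k = m then detF (D.S t x) else 0 := by
        refine this.trans ?_
        split_ifs <;> simp [detF]
      rw [← Complex.ofReal_zero, ← apply_ite Complex.ofReal, ← h2]
      push_cast; rfl
    have : ∀ j, (-(1 / 2) * ∑ k, zeta x k * (D.S t x k j : ℂ))
          * ∑ k, (adjF (D.S t x) j k : ℂ) * D.H x k
        = -(1 / 2) * ∑ k, ∑ m, zeta x k * D.H x m
          * ((D.S t x k j : ℂ) * (adjF (D.S t x) j m : ℂ)) := by
      intro j
      rw [mul_assoc, Finset.sum_mul_sum]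
      congr 1
      exact Finset.sum_congr rfl fun k _ => Finset.sum_congr rfl fun m _ => by ring
    rw [Finset.sum_congr rfl fun j _ => this j, ← Finset.mul_sum, mul_assoc]
    congr 1
    rw [Finset.sum_comm, Finset.sum_mul]
    refine Finset.sum_congr rfl fun k _ => ?_
    rw [Finset.sum_comm]
    simp only [← Finset.mul_sum, hmul]
    simp
  · push_cast
    refine Finset.sum_congr rfl fun j _ => Finset.sum_congr rfl fun k _ => ?_
    simp

/-- Integration by parts: an integrable function with integrable line derivative in one direction
has a line derivative of integral zero. -/
lemma integral_V' (j : Fin n) (σ τ : ℝ) {t : ℝ} (ht : t ∈ Set.Icc (0 : ℝ) 1) :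
    Integrable (D.V' j σ τ t) ∧ ∫ x, D.V' j σ τ t x = 0 := by
  have h1 : Integrable (D.V' j σ τ t) := D.integrable_mul (D.pg_V' j σ τ) ht
  have h2 : Integrable (D.V j t) := D.integrable_mul (D.pg_V j) ht
  refine ⟨h1, ?_⟩
  have := integral_bilinear_hasLineDerivAt_right_eq_neg_left_of_integrable
    (μ := (volume : Measure (Euc n × Euc n))) (f := fun _ => (1 : ℂ)) (f' := fun _ => 0)
    (g := D.V j t) (g' := D.V' j σ τ t) (v := dir j σ τ) (B := ContinuousLinearMap.mul ℝ ℂ)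
    (by simp) (by simpa using h1) (by simpa using h2)
    (fun x _ => by simpa [HasLineDerivAt] using hasDerivAt_const (0 : ℝ) (1 : ℂ))
    (fun x _ => D.line_V j σ τ t x)
  simpa using this

lemma integral_F' {t : ℝ} (ht : t ∈ Set.Ico (0 : ℝ) 1) : ∫ x, D.F' t x = 0 := by
  have ht' : t ∈ Set.Icc (0 : ℝ) 1 := ⟨ht.1, ht.2.le⟩
  simp only [D.F'_eq_div ht]
  rw [integral_finsetSum (f := fun j x => D.V' j 1 0 t x + Complex.I * D.V' j 0 1 t x) _
    fun j _ => (D.integral_V' j 1 0 ht').1.add ((D.integral_V' j 0 1 ht').1.const_mul _)]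
  refine Finset.sum_eq_zero fun j _ => ?_
  rw [integral_add (D.integral_V' j 1 0 ht').1 ((D.integral_V' j 0 1 ht').1.const_mul _),
    (D.integral_V' j 1 0 ht').2, integral_const_mul, (D.integral_V' j 0 1 ht').2]
  simp

lemma integrable_F {t : ℝ} (ht : t ∈ Set.Icc (0 : ℝ) 1) : Integrable (D.F t) :=
  D.integrable_mul D.pg_det ht

/-- Invariance of the integral along the deformation. -/
lemma integral_F_one_eq : ∫ x, D.F 1 x = ∫ x, D.F 0 x := by
  obtain ⟨B, hB⟩ := D.dominated D.pg_det
  obtain ⟨B', hB'⟩ := D.dominated D.pg_F'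
  have hcont : ContinuousOn (fun t => ∫ x, D.F t x) (Set.Icc 0 1) := by
    refine continuousOn_of_dominated (bound := fun x => B * dom n x)
      (fun t ht => (D.integrable_F ht).aestronglyMeasurable)
      (fun t ht => Filter.Eventually.of_forall fun x => hB t ht x)
      ((integrable_dom n).const_mul B)
      (Filter.Eventually.of_forall fun x t _ => (D.deriv_F t x).continuousAt.continuousWithinAt)
  have hder : ∀ t ∈ Set.Ioo (0 : ℝ) 1, HasDerivAt (fun t => ∫ x, D.F t x) 0 t := by
    intro t ht
    have h := hasDerivAt_integral_of_dominated_loc_of_deriv_le (μ := volume)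
      (F := D.F) (F' := D.F') (x₀ := t) (s := Set.Ioo 0 1) (bound := fun x => B' * dom n x)
      (Ioo_mem_nhds ht.1 ht.2)
      (Filter.eventually_of_mem (Ioo_mem_nhds ht.1 ht.2) fun s hs =>
        (D.integrable_F ⟨hs.1.le, hs.2.le⟩).aestronglyMeasurable)
      (D.integrable_F ⟨ht.1.le, ht.2.le⟩)
      (D.integrable_mul D.pg_F' ⟨ht.1.le, ht.2.le⟩).aestronglyMeasurable
      (Filter.Eventually.of_forall fun x s hs => hB' s ⟨hs.1.le, hs.2.le⟩ x)
      ((integrable_dom n).const_mul B')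
      (Filter.Eventually.of_forall fun x s _ => D.deriv_F s x)
    have := h.2
    rwa [D.integral_F' ⟨ht.1.le, ht.2⟩] at this
  have := intervalIntegral.integral_eq_sub_of_hasDerivAt_of_le zero_le_one hcont hder
    intervalIntegrable_const
  simp only [intervalIntegral.integral_zero] at this
  exact (sub_eq_zero.1 this.symm)

/-- For the quadratic potential the exponent is `-|ζ|² / 2` and the determinant is `2ⁿ`, so the
integral is Gaussian. -/
lemma integral_F_zero : ∫ x, D.F 0 x = ((4 * Real.pi) ^ n : ℝ) := by
  have hF : ∀ x, D.F 0 x = ((2 ^ n * (Real.exp (-(1 / 2) * ‖x.1‖ ^ 2)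
      * Real.exp (-(1 / 2) * ‖x.2‖ ^ 2)) : ℝ) : ℂ) := by
    intro x
    have hS : Matrix.of (D.S 0 x) = (2 : ℝ) • (1 : Matrix (Fin n) (Fin n) ℝ) := by
      ext k l
      simp [S, Q, Matrix.one_apply]
      split_ifs <;> norm_num
    have hd : detF (D.S 0 x) = 2 ^ n := by
      rw [detF, hS, Matrix.det_smul]; simp
    have hz : ∑ k, zeta x k * D.Gc 0 x k = ((‖x.1‖ ^ 2 + ‖x.2‖ ^ 2 : ℝ) : ℂ) := by
      rw [EuclideanSpace.real_norm_sq_eq, EuclideanSpace.real_norm_sq_eq, ← Finset.sum_add_distrib]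
      push_cast
      refine Finset.sum_congr rfl fun k _ => ?_
      simp only [zeta, Gc, p]
      push_cast
      linear_combination (-(x.2 k : ℂ) ^ 2) * Complex.I_sq
    rw [F, w, hz, hd, ← Real.exp_add]
    push_cast
    rw [mul_comm]
    congr 2
    ring
  simp only [hF]
  rw [integral_complex_ofReal]
  congr 1
  rw [integral_const_mul]
  have hg : ∫ a : Euc n, Real.exp (-(1 / 2) * ‖a‖ ^ 2) = (2 * Real.pi) ^ ((n : ℝ) / 2) := by
    rw [GaussianFourier.integral_rexp_neg_mul_sq_norm (by norm_num)]
    simp only [finrank_euclideanSpace, Fintype.card_fin]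
    congr 1; ring
  have hp : ∫ x : Euc n × Euc n, Real.exp (-(1 / 2) * ‖x.1‖ ^ 2) * Real.exp (-(1 / 2) * ‖x.2‖ ^ 2)
      = (∫ a : Euc n, Real.exp (-(1 / 2) * ‖a‖ ^ 2)) * ∫ a : Euc n, Real.exp (-(1 / 2) * ‖a‖ ^ 2) :=
    integral_prod_mul (μ := (volume : Measure (Euc n))) (ν := (volume : Measure (Euc n)))
      (fun a => Real.exp (-(1 / 2) * ‖a‖ ^ 2)) (fun a => Real.exp (-(1 / 2) * ‖a‖ ^ 2))
  have hpi : 0 < 2 * Real.pi := by positivity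
  rw [hp, hg, ← Real.rpow_add hpi, add_halves, Real.rpow_natCast, ← mul_pow]
  congr 1; ring

/-- Taking absolute values in the invariant integral: the modulus of the weight only involves the
real part `⟨x, ∇φ(x)⟩ + ⟨x', ∇φ(x')⟩` of `⟨ζ, G(ζ)⟩`. -/
lemma lower_bound :
    ENNReal.ofReal ((4 * Real.pi) ^ n) ≤ ∫⁻ x : Euc n × Euc n,
      ENNReal.ofReal (Real.exp (-(1 / 2) * (∑ k, x.1 k * D.g x.1 k + ∑ k, x.2 k * D.g x.2 k)))
        * ENNReal.ofReal |detF (D.A x.1 + D.A x.2)| := by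
  have h1 : ((4 * Real.pi) ^ n : ℝ) ≤ ∫ x, ‖D.F 1 x‖ := by
    have := norm_integral_le_integral_norm (μ := volume) (D.F 1)
    rw [D.integral_F_one_eq, D.integral_F_zero, Complex.norm_real, Real.norm_eq_abs] at this
    exact (le_abs_self _).trans this
  refine (ENNReal.ofReal_le_ofReal h1).trans ?_
  rw [ofReal_integral_norm_eq_lintegral_enorm (D.integrable_F (by simp))]
  refine lintegral_mono fun x => ?_
  rw [← ENNReal.ofReal_mul (Real.exp_pos _).le, ← ofReal_norm]
  refine ENNReal.ofReal_le_ofReal (le_of_eq ?_)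
  have hS : D.S 1 x = D.A x.1 + D.A x.2 := by
    funext k l; simp [S, Q]
  have hp : ∀ a k, D.p 1 a k = D.g a k := fun a k => by simp [p]
  rw [F, norm_mul, D.norm_w, Complex.norm_real, Real.norm_eq_abs, hS]
  simp only [hp]

end TameGradient
end MEll

namespace MEll

/-! ### Symmetric bodies and exponentially tilted measures -/

/-- Origin-symmetric convex bodies. -/
structure SymBody {n : ℕ} (K : Set (Euc n)) : Prop where
  convex : Convex ℝ K
  compact : IsCompact K
  symm : ∀ x ∈ K, -x ∈ K
  inter : (interior K).Nonempty

variable {n : ℕ}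

/-- Exponential moments `∫_K f(x) exp ⟨x,y⟩ dx`. -/
def mom (K : Set (Euc n)) (f : Euc n → ℝ) (y : Euc n) : ℝ :=
  ∫ x in K, f x * Real.exp (inner ℝ x y)

/-- The probability measure on `K` with density proportional to `exp ⟨x,y⟩`. -/
def tm (K : Set (Euc n)) (y : Euc n) : Measure (Euc n) :=
  (volume.restrict K).tilted fun x => inner ℝ x y

/-- Expectation with respect to the exponentially tilted measure on `K`. -/
def ex (K : Set (Euc n)) (f : Euc n → ℝ) (y : Euc n) : ℝ := ∫ x, f x ∂(tm K y)

/-- The `j`-th coordinate functional. -/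
def crd (j : Fin n) : Euc n →L[ℝ] ℝ := EuclideanSpace.proj j

lemma crd_apply (j : Fin n) (v : Euc n) : crd j v = v j := rfl

namespace SymBody

variable {K : Set (Euc n)}

lemma meas (hK : SymBody K) : MeasurableSet K := hK.compact.isClosed.measurableSet

lemma vol_pos (hK : SymBody K) : 0 < volume.real K :=
  ENNReal.toReal_pos ((isOpen_interior.measure_pos volume hK.inter).trans_le
    (measure_mono interior_subset)).ne' hK.compact.measure_lt_top.ne

lemma int (hK : SymBody K) {f : Euc n → ℝ} (hf : Continuous f) : Integrable f (volume.restrict K) :=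
  hf.continuousOn.integrableOn_compact hK.compact

lemma int_mom (hK : SymBody K) {f : Euc n → ℝ} (hf : Continuous f) (y : Euc n) :
    Integrable (fun x => f x * Real.exp (inner ℝ x y)) (volume.restrict K) :=
  hK.int (by fun_prop)

lemma neZero (hK : SymBody K) : NeZero (volume.restrict K) := ⟨fun h => by
  have := hK.vol_pos
  rw [Measure.restrict_eq_zero] at h
  simp [Measure.real, h] at this⟩

lemma prob (hK : SymBody K) (y : Euc n) : IsProbabilityMeasure (tm K y) := by
  have := hK.neZero
  exact isProbabilityMeasure_tilted (hK.int (by fun_prop))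

lemma mom_one_pos (hK : SymBody K) (y : Euc n) : 0 < mom K (fun _ => 1) y := by
  have := hK.neZero
  simp only [mom, one_mul]
  exact integral_exp_pos (hK.int (by fun_prop))

lemma ex_eq (f : Euc n → ℝ) (y : Euc n) : ex K f y = mom K f y / mom K (fun _ => 1) y := by
  rw [ex, tm, integral_tilted, mom, mom, ← integral_div]
  refine integral_congr_ae (Filter.Eventually.of_forall fun x => ?_)
  simp only [smul_eq_mul, one_mul]; ring

lemma int_tm (hK : SymBody K) {f : Euc n → ℝ} (hf : Continuous f) (y : Euc n) :
    Integrable f (tm K y) := by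
  rw [tm, integrable_tilted_iff (hK.int (by fun_prop))]
  exact hK.int (by fun_prop)

lemma ae_mem (hK : SymBody K) (y : Euc n) : ∀ᵐ x ∂(tm K y), x ∈ K :=
  (tilted_absolutelyContinuous _ _).ae_le (ae_restrict_mem hK.meas)

lemma exists_bound (hK : SymBody K) {f : Euc n → ℝ} (hf : Continuous f) : ∃ M, ∀ x ∈ K, |f x| ≤ M :=
  hK.compact.exists_bound_of_continuousOn hf.continuousOn

lemma hasFDerivAt_mom (hK : SymBody K) {f : Euc n → ℝ} (hf : Continuous f) (y : Euc n) :
    HasFDerivAt (mom K f)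
      (∑ j, mom K (fun x => f x * x j) y • crd j) y := by
  obtain ⟨R, hR⟩ := hK.compact.exists_bound_of_continuousOn (f := fun x : Euc n => x)
    continuous_id.continuousOn
  have hF'c : ∀ z : Euc n, Continuous fun x : Euc n =>
      (f x * Real.exp (inner ℝ x z)) • innerSL ℝ x := fun z =>
    (by fun_prop : Continuous fun x => f x * Real.exp (inner ℝ x z)).smul (innerSL ℝ).continuous
  have h := hasFDerivAt_integral_of_dominated_of_fderiv_le (𝕜 := ℝ) (μ := volume.restrict K)
    (F := fun y x => f x * Real.exp (inner ℝ x y)) (x₀ := y) (s := Metric.ball y 1)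
    (F' := fun y x => (f x * Real.exp (inner ℝ x y)) • innerSL ℝ x)
    (bound := fun x => |f x| * Real.exp (R * (‖y‖ + 1)) * ‖x‖)
    (Metric.ball_mem_nhds y one_pos)
    (Filter.Eventually.of_forall fun z => (hK.int_mom hf z).aestronglyMeasurable)
    (hK.int_mom hf y) (hF'c y).aestronglyMeasurable
    (by
      filter_upwards [ae_restrict_mem hK.meas] with x hx z hz
      rw [norm_smul, norm_mul, innerSL_apply_norm, Real.norm_eq_abs, Real.norm_eq_abs,
        Real.abs_exp]
      gcongr
      have hzn : ‖z‖ ≤ ‖y‖ + 1 := by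
        have : ‖z - y‖ < 1 := by simpa [dist_eq_norm] using hz
        linarith [norm_le_norm_add_norm_sub' z y]
      refine (real_inner_le_norm x z).trans ?_
      exact mul_le_mul (hR x hx) hzn (norm_nonneg _) ((norm_nonneg _).trans (hR x hx)))
    (hK.int (by fun_prop))
    (Filter.Eventually.of_forall fun x z _ => by
      have h1 := ((innerSL ℝ x).hasFDerivAt (x := z)).exp.const_mul (f x)
      refine h1.congr_fderiv ?_
      rw [smul_smul]; rfl)
  refine h.congr_fderiv ?_
  have hfi : Integrable (fun x : Euc n => (f x * Real.exp (inner ℝ x y)) • innerSL ℝ x)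
    (volume.restrict K) := (hF'c y).continuousOn.integrableOn_compact hK.compact
  ext v
  rw [ContinuousLinearMap.integral_apply hfi]
  simp only [sum_apply, smul_apply, smul_eq_mul, mom,
    crd_apply, innerSL_apply_apply]
  rw [Finset.sum_congr rfl fun j _ => (integral_mul_const (v j) _).symm]
  rw [← integral_finsetSum _ fun j _ => hK.int (by fun_prop)]
  refine integral_congr_ae (Filter.Eventually.of_forall fun x => ?_)
  simp only [PiLp.inner_apply, RCLike.inner_apply, conj_trivial, Finset.mul_sum]
  exact Finset.sum_congr rfl fun j _ => by ring

/-- Differentiating an expectation in the tilt produces a covariance. -/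
lemma hasFDerivAt_ex (hK : SymBody K) {f : Euc n → ℝ} (hf : Continuous f) (y : Euc n) :
    HasFDerivAt (ex K f)
      (∑ j, (ex K (fun x => f x * x j) y - ex K f y * ex K (fun x => x j) y) •
        crd j) y := by
  have h0 := (hK.mom_one_pos y).ne'
  have h := (hK.hasFDerivAt_mom hf y).mul ((hasDerivAt_inv h0).comp_hasFDerivAt y
    (hK.hasFDerivAt_mom (f := fun _ => 1) continuous_const y))
  have e : ex K f = mom K f * (Inv.inv ∘ mom K fun _ => 1) := funext fun z => by
    rw [ex_eq, div_eq_mul_inv]; rfl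
  rw [e]
  refine h.congr_fderiv ?_
  rw [← e]
  ext v
  simp only [sum_apply, smul_apply, smul_eq_mul,
    add_apply, one_mul, ex_eq, Function.comp]
  rw [Finset.mul_sum, Finset.mul_sum, Finset.mul_sum, ← Finset.sum_add_distrib]
  refine Finset.sum_congr rfl fun j _ => ?_
  field_simp
  ring

lemma cont_ex (hK : SymBody K) {f : Euc n → ℝ} (hf : Continuous f) : Continuous (ex K f) :=
  continuous_iff_continuousAt.2 fun y => (hK.hasFDerivAt_ex hf y).continuousAt

lemma abs_ex_le (hK : SymBody K) {f : Euc n → ℝ} {M : ℝ} (hM : ∀ x ∈ K, |f x| ≤ M) (y : Euc n) :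
    |ex K f y| ≤ M := by
  have := hK.prob y
  have h := norm_integral_le_of_norm_le_const (μ := tm K y) (f := f) (C := M)
    ((hK.ae_mem y).mono fun x hx => hM x hx)
  simpa [ex] using h

end SymBody

/-! ### Derivatives of the logarithmic Laplace transform -/

/-- The barycentre of the tilted measure on `K`, which is the gradient at `y` of the logarithmic
Laplace transform. -/
def grad (K : Set (Euc n)) (y : Euc n) (k : Fin n) : ℝ := ex K (fun x => x k) y

/-- The covariance of the tilted measure on `K`, which is the Hessian at `y` of the logarithmic
Laplace transform. -/
def hess (K : Set (Euc n)) (y : Euc n) (k l : Fin n) : ℝ :=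
  ex K (fun x => x k * x l) y - ex K (fun x => x k) y * ex K (fun x => x l) y

/-- The derivative of `hess K · k l` at `y` in the direction `j`. -/
def third (K : Set (Euc n)) (y : Euc n) (j k l : Fin n) : ℝ :=
  ex K (fun x => x k * x l * x j) y - ex K (fun x => x k * x l) y * ex K (fun x => x j) y
    - (hess K y k j * ex K (fun x => x l) y + ex K (fun x => x k) y * hess K y l j)

namespace SymBody

variable {K : Set (Euc n)}

lemma hasFDerivAt_grad (hK : SymBody K) (y : Euc n) (k : Fin n) :
    HasFDerivAt (fun y => grad K y k)
      (∑ j, hess K y k j • crd j) y :=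
  hK.hasFDerivAt_ex (f := fun x => x k) (by fun_prop) y

lemma hasFDerivAt_hess (hK : SymBody K) (y : Euc n) (k l : Fin n) :
    HasFDerivAt (fun y => hess K y k l)
      (∑ j, third K y j k l • crd j) y := by
  refine ((hK.hasFDerivAt_ex (f := fun x => x k * x l) (by fun_prop) y).sub
    ((hK.hasFDerivAt_grad y k).mul (hK.hasFDerivAt_grad y l))).congr_fderiv ?_
  ext v
  simp only [sum_apply, smul_apply, smul_eq_mul,
    sub_apply, add_apply, grad]
  rw [Finset.mul_sum, Finset.mul_sum, ← Finset.sum_add_distrib, ← Finset.sum_sub_distrib]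
  refine Finset.sum_congr rfl fun j _ => ?_
  simp only [third]; ring

lemma cont_grad (hK : SymBody K) : Continuous (grad K) :=
  continuous_pi fun k => hK.cont_ex (by fun_prop)

lemma cont_hess (hK : SymBody K) : Continuous (hess K) :=
  continuous_pi fun k => continuous_pi fun l =>
  (hK.cont_ex (by fun_prop)).sub ((hK.cont_ex (by fun_prop)).mul (hK.cont_ex (by fun_prop)))

lemma cont_third (hK : SymBody K) : Continuous (third K) := by
  have h := hK.cont_hess
  refine continuous_pi fun j => continuous_pi fun k => continuous_pi fun l => ?_
  have h1 := hK.cont_ex (f := fun x => x k * x l * x j) (by fun_prop)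
  have h2 := hK.cont_ex (f := fun x => x k * x l) (by fun_prop)
  have h3 := hK.cont_ex (f := fun x => x j) (by fun_prop)
  have h4 := hK.cont_ex (f := fun x => x k) (by fun_prop)
  have h5 := hK.cont_ex (f := fun x => x l) (by fun_prop)
  unfold third
  fun_prop

lemma exists_bounds (hK : SymBody K) : ∃ M, (∀ y, ‖grad K y‖ ≤ M) ∧ (∀ y, ‖hess K y‖ ≤ M) ∧
    ∀ y, ‖third K y‖ ≤ M := by
  obtain ⟨R, hR⟩ := hK.compact.exists_bound_of_continuousOn (f := fun x : Euc n => x)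
    continuous_id.continuousOn
  set r := max R 0
  have hr : 0 ≤ r := le_max_right _ _
  have hc : ∀ x ∈ K, ∀ k, |x k| ≤ r := fun x hx k =>
    (PiLp.norm_apply_le x k).trans ((hR x hx).trans (le_max_left _ _))
  have h1 : ∀ y k, |ex K (fun x => x k) y| ≤ r := fun y k =>
    hK.abs_ex_le (fun x hx => hc x hx k) y
  have h2 : ∀ y k l, |ex K (fun x => x k * x l) y| ≤ r * r := fun y k l =>
    hK.abs_ex_le (fun x hx => by
      rw [abs_mul]
      exact mul_le_mul (hc x hx k) (hc x hx l) (abs_nonneg _) hr) y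
  have h3 : ∀ y k l j, |ex K (fun x => x k * x l * x j) y| ≤ r * r * r := fun y k l j =>
    hK.abs_ex_le (fun x hx => by
      rw [abs_mul, abs_mul]
      exact mul_le_mul (mul_le_mul (hc x hx k) (hc x hx l) (abs_nonneg _) hr) (hc x hx j)
        (abs_nonneg _) (by positivity)) y
  have hA : ∀ y k l, |hess K y k l| ≤ 2 * r ^ 2 := fun y k l => by
    refine (abs_sub _ _).trans ?_
    rw [abs_mul]
    have := mul_le_mul (h1 y k) (h1 y l) (abs_nonneg _) hr
    linarith [h2 y k l]
  have hT : ∀ y j k l, |third K y j k l| ≤ 6 * r ^ 3 := fun y j k l => by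
    refine (abs_sub _ _).trans ((add_le_add (abs_sub _ _) (abs_add_le _ _)).trans ?_)
    rw [abs_mul, abs_mul, abs_mul]
    have a1 := mul_le_mul (h2 y k l) (h1 y j) (abs_nonneg _) (by positivity)
    have a2 := mul_le_mul (hA y k j) (h1 y l) (abs_nonneg _) (by positivity)
    have a3 := mul_le_mul (h1 y k) (hA y l j) (abs_nonneg _) hr
    linarith [h3 y k l j]
  refine ⟨r + 2 * r ^ 2 + 6 * r ^ 3, fun y => ?_, fun y => ?_, fun y => ?_⟩
  · refine (pi_norm_le_iff_of_nonneg (by positivity)).2 fun k => (h1 y k).trans ?_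
    have : 0 ≤ 2 * r ^ 2 + 6 * r ^ 3 := by positivity
    linarith
  · refine (pi_norm_le_iff_of_nonneg (by positivity)).2 fun k =>
      (pi_norm_le_iff_of_nonneg (by positivity)).2 fun l => (hA y k l).trans ?_
    have : 0 ≤ r + 6 * r ^ 3 := by positivity
    linarith
  · refine (pi_norm_le_iff_of_nonneg (by positivity)).2 fun j =>
      (pi_norm_le_iff_of_nonneg (by positivity)).2 fun k =>
      (pi_norm_le_iff_of_nonneg (by positivity)).2 fun l => (hT y j k l).trans ?_
    have : 0 ≤ r + 2 * r ^ 2 := by positivity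
    linarith

lemma hess_eq_cov (hK : SymBody K) (y : Euc n) (k l : Fin n) :
    hess K y k l = ex K (fun x => (x k - grad K y k) * (x l - grad K y l)) y := by
  have := hK.prob y
  have e : ∀ x : Euc n, (x k - grad K y k) * (x l - grad K y l)
      = x k * x l - grad K y k * x l - grad K y l * x k + grad K y k * grad K y l := by
    intro x; ring
  have e2 : ex K (fun x => (x k - grad K y k) * (x l - grad K y l)) y
      = ex K (fun x => x k * x l) y - grad K y k * grad K y l - grad K y l * grad K y k
        + grad K y k * grad K y l := by
    simp only [e]
    simp only [ex]
    rw [integral_add (hK.int_tm (by fun_prop) y) (integrable_const _),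
      integral_sub (hK.int_tm (by fun_prop) y) (hK.int_tm (by fun_prop) y),
      integral_sub (hK.int_tm (by fun_prop) y) (hK.int_tm (by fun_prop) y),
      integral_const_mul, integral_const_mul, integral_const]
    simp [grad, ex]
  rw [e2, hess]; simp only [grad]; ring

/-- Pairing the Hessian with a matrix gives the expectation of the corresponding quadratic form. -/
lemma sum_hess (hK : SymBody K) (y : Euc n) (B : Fin n → Fin n → ℝ) :
    ∑ k, ∑ l, B k l * hess K y k l
      = ex K (fun x => ∑ k, ∑ l, (x k - grad K y k) * B k l * (x l - grad K y l)) y := by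
  simp only [hK.hess_eq_cov, ex]
  rw [integral_finsetSum _ fun k _ => hK.int_tm (by fun_prop) y]
  refine Finset.sum_congr rfl fun k _ => ?_
  rw [integral_finsetSum _ fun l _ => hK.int_tm (by fun_prop) y]
  refine Finset.sum_congr rfl fun l _ => ?_
  rw [← integral_const_mul]
  exact integral_congr_ae (Filter.Eventually.of_forall fun x => by ring)

lemma hess_quad (hK : SymBody K) (y : Euc n) (v : Fin n → ℝ) :
    ∑ k, ∑ l, v k * hess K y k l * v l = ex K (fun x => (∑ k, v k * (x k - grad K y k)) ^ 2) y := by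
  have h := hK.sum_hess y fun k l => v k * v l
  rw [Finset.sum_congr rfl fun k _ => Finset.sum_congr rfl fun l _ =>
    (by ring : v k * v l * hess K y k l = v k * hess K y k l * v l)] at h
  rw [h]
  congr 1
  funext x
  rw [sq, Finset.sum_mul_sum]
  exact Finset.sum_congr rfl fun k _ => Finset.sum_congr rfl fun l _ => by ring

lemma hess_psd (hK : SymBody K) (y : Euc n) (v : Fin n → ℝ) :
    0 ≤ ∑ k, ∑ l, v k * hess K y k l * v l := by
  rw [hK.hess_quad]
  exact integral_nonneg fun x => sq_nonneg _

/-- The covariance is nondegenerate since `K` has nonempty interior. -/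
lemma hess_pos (hK : SymBody K) (y : Euc n) (v : Fin n → ℝ) (hv : v ≠ 0) :
    0 < ∑ k, ∑ l, v k * hess K y k l * v l := by
  refine (hK.hess_psd y v).lt_of_ne fun h0 => hv ?_
  rw [hK.hess_quad, ex] at h0
  have h1 := (integral_eq_zero_iff_of_nonneg (fun x => sq_nonneg _)
    (hK.int_tm ((by fun_prop : Continuous fun x : Euc n =>
      ∑ k, v k * (x k - grad K y k)).pow 2) y)).1 h0.symm
  have h2 : (fun x : Euc n => (∑ k, v k * (x k - grad K y k)) ^ 2)
      =ᵐ[volume.restrict (interior K)] fun _ => 0 :=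
    ae_restrict_of_ae_restrict_of_subset interior_subset
      ((absolutelyContinuous_tilted (hK.int (by fun_prop))).ae_le h1)
  have h3 := Measure.eqOn_open_of_ae_eq h2 isOpen_interior (by fun_prop) continuousOn_const
  obtain ⟨c, hc⟩ := hK.inter
  -- a linear functional that is constant on an open set vanishes
  have h4 : ∀ᶠ s : ℝ in nhds 0, c + s • WithLp.toLp 2 v ∈ interior K :=
    (by fun_prop : Continuous fun s : ℝ => c + s • WithLp.toLp 2 v).continuousAt.eventually_mem
      (isOpen_interior.mem_nhds (by simpa using hc))
  obtain ⟨s, hs, hs0⟩ := ((h4.filter_mono nhdsWithin_le_nhds).and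
    (self_mem_nhdsWithin (s := {0}ᶜ))).exists
  have e1 := pow_eq_zero_iff (two_ne_zero) |>.1 (h3 hc)
  have e2 := pow_eq_zero_iff (two_ne_zero) |>.1 (h3 hs)
  have e3 : s * ∑ k, v k * v k = 0 := by
    have : ∑ k, v k * ((c + s • WithLp.toLp 2 v : Euc n) k - grad K y k)
        = ∑ k, v k * (c k - grad K y k) + s * ∑ k, v k * v k := by
      rw [Finset.mul_sum, ← Finset.sum_add_distrib]
      refine Finset.sum_congr rfl fun k _ => ?_
      simp; ring
    linarith
  have e4 := (mul_eq_zero.1 e3).resolve_left hs0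
  funext k
  have := (Finset.sum_eq_zero_iff_of_nonneg fun k _ => mul_self_nonneg (v k)).1 e4 k
    (Finset.mem_univ _)
  simpa using this

lemma hess_symm (y : Euc n) (k l : Fin n) : hess K y k l = hess K y l k := by
  simp only [hess, mul_comm]

lemma third_symm (y : Euc n) (j m l : Fin n) : third K y j m l = third K y l m j := by
  simp only [third, hess]
  have : (fun x : Euc n => x m * x l * x j) = fun x => x m * x j * x l := by funext x; ring
  rw [this, show (fun x : Euc n => x l * x j) = fun x => x j * x l by funext x; ring]
  ring

end SymBody
end MEll

namespace MEll
variable {n : ℕ}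

/-! ### The logarithmic Laplace transform -/

/-- The logarithmic Laplace transform of the uniform probability measure on `K`. -/
def phi (K : Set (Euc n)) (y : Euc n) : ℝ := Real.log (mom K (fun _ => 1) y / volume.real K)

namespace SymBody

variable {K : Set (Euc n)}

lemma exp_phi (hK : SymBody K) (y : Euc n) :
    Real.exp (phi K y) = mom K (fun _ => 1) y / volume.real K :=
  Real.exp_log (div_pos (hK.mom_one_pos y) hK.vol_pos)

lemma cont_phi (hK : SymBody K) : Continuous (phi K) := by
  have h : Continuous (mom K fun _ => 1) := continuous_iff_continuousAt.2 fun y =>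
    (hK.hasFDerivAt_mom (f := fun _ => 1) continuous_const y).continuousAt
  exact (h.div_const _).log fun y => (div_pos (hK.mom_one_pos y) hK.vol_pos).ne'

/-- The gradient inequality for the convex function `φ`, by Jensen's inequality for `exp`. -/
lemma phi_grad (hK : SymBody K) (a b : Euc n) :
    phi K a + ∑ k, (b k - a k) * grad K a k ≤ phi K b := by
  have := hK.prob a
  set m := ∑ k, (b k - a k) * grad K a k
  have hin : ∀ x : Euc n, inner ℝ x (b - a) = ∑ k, (b k - a k) * x k := fun x => by
    simp [PiLp.inner_apply]
  have h1 : ex K (fun x => inner ℝ x (b - a)) a = m := by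
    simp only [ex, hin, m, grad]
    rw [integral_finsetSum _ fun k _ => hK.int_tm (by fun_prop) a]
    simp only [integral_const_mul]
  have h2 : ex K (fun x => Real.exp (inner ℝ x (b - a))) a
      = mom K (fun _ => 1) b / mom K (fun _ => 1) a := by
    rw [ex_eq]
    congr 1
    refine integral_congr_ae (Filter.Eventually.of_forall fun x => ?_)
    simp only [one_mul]
    rw [← Real.exp_add, ← inner_add_right, sub_add_cancel]
  have h3 : Real.exp m ≤ ex K (fun x => Real.exp (inner ℝ x (b - a))) a := by
    have e : ex K (fun x => Real.exp m * (inner ℝ x (b - a) + (1 - m))) a = Real.exp m := by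
      simp only [ex] at h1 ⊢
      rw [integral_const_mul, integral_add (hK.int_tm (by fun_prop) a) (integrable_const _), h1]
      simp
    rw [← e]
    refine integral_mono (hK.int_tm (by fun_prop) a) (hK.int_tm (by fun_prop) a) fun x => ?_
    have e1 := Real.add_one_le_exp (inner ℝ x (b - a) - m)
    calc Real.exp m * (inner ℝ x (b - a) + (1 - m))
        ≤ Real.exp m * Real.exp (inner ℝ x (b - a) - m) := by
          gcongr; linarith
      _ = _ := by rw [← Real.exp_add]; congr 1; ring
  rw [h2, ← Real.le_log_iff_exp_le (div_pos (hK.mom_one_pos b) (hK.mom_one_pos a)),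
    Real.log_div (hK.mom_one_pos b).ne' (hK.mom_one_pos a).ne'] at h3
  rw [phi, phi, Real.log_div (hK.mom_one_pos a).ne' hK.vol_pos.ne',
    Real.log_div (hK.mom_one_pos b).ne' hK.vol_pos.ne']
  linarith

lemma phi_zero (hK : SymBody K) : phi K 0 = 0 := by
  have : mom K (fun _ => 1) 0 = volume.real K := by simp [mom]
  rw [phi, this, div_self hK.vol_pos.ne', Real.log_one]

lemma mem_neg_iff (hK : SymBody K) (x : Euc n) : -x ∈ K ↔ x ∈ K :=
  ⟨fun h => by simpa using hK.symm _ h, hK.symm x⟩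

lemma grad_zero (hK : SymBody K) (k : Fin n) : grad K 0 k = 0 := by
  rw [grad, ex_eq]
  have h : ∫ x in K, x k = -∫ x in K, x k := by
    rw [← integral_neg, ← integral_indicator hK.meas, ← integral_indicator hK.meas,
      ← integral_neg_eq_self]
    refine integral_congr_ae (Filter.Eventually.of_forall fun x => ?_)
    by_cases h : x ∈ K <;> simp [Set.indicator, hK.mem_neg_iff, h]
  have : mom K (fun x => x k) 0 = 0 := by
    simp only [mom, inner_zero_right, Real.exp_zero, mul_one]; linarith
  rw [this, zero_div]

/-- Symmetry of `K` makes the origin a critical point of the convex function `φ`. -/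
lemma phi_nonneg (hK : SymBody K) (y : Euc n) : 0 ≤ phi K y := by
  have := hK.phi_grad 0 y
  simpa [hK.grad_zero, hK.phi_zero] using this

lemma phi_le_dot (hK : SymBody K) (a : Euc n) : phi K a ≤ ∑ k, a k * grad K a k := by
  have := hK.phi_grad a 0
  simp only [hK.phi_zero, PiLp.zero_apply, zero_sub, neg_mul, Finset.sum_neg_distrib] at this
  linarith

lemma phi_mid (hK : SymBody K) (a b : Euc n) :
    phi K ((1 / 2 : ℝ) • (a + b)) ≤ (phi K a + phi K b) / 2 := by
  have h1 := hK.phi_grad ((1 / 2 : ℝ) • (a + b)) a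
  have h2 := hK.phi_grad ((1 / 2 : ℝ) • (a + b)) b
  have h3 : ∑ k, (a k - ((1 / 2 : ℝ) • (a + b) : Euc n) k) * grad K ((1 / 2 : ℝ) • (a + b)) k
      + ∑ k, (b k - ((1 / 2 : ℝ) • (a + b) : Euc n) k) * grad K ((1 / 2 : ℝ) • (a + b)) k = 0 := by
    rw [← Finset.sum_add_distrib]
    refine Finset.sum_eq_zero fun k _ => ?_
    simp only [PiLp.smul_apply, PiLp.add_apply, smul_eq_mul]; ring
  linarith

/-- Convexity together with `φ(0) = 0`. -/
lemma phi_two (hK : SymBody K) (w : Euc n) : 2 * phi K w ≤ phi K ((2 : ℝ) • w) := by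
  have := hK.phi_mid ((2 : ℝ) • w) 0
  rw [add_zero, smul_smul, hK.phi_zero] at this
  norm_num at this
  linarith

/-- The support function of `K` is controlled by `φ`: restrict the integral defining `φ` to
the half-size copy `(x₀ + K)/2` of `K`. -/
lemma inner_le_phi (hK : SymBody K) {x₀ : Euc n} (hx : x₀ ∈ K) (y : Euc n) :
    inner ℝ x₀ y ≤ 2 * phi K y + 2 * n * Real.log 2 := by
  set f : Euc n → ℝ := K.indicator fun x => Real.exp (inner ℝ x y)
  have hf : Integrable f := (integrable_indicator_iff hK.meas).2 (hK.int (by fun_prop))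
  have e1 : mom K (fun _ => 1) y = ∫ x, f x := by
    simp only [mom, one_mul, f]
    rw [integral_indicator hK.meas]
  have e2 : ∫ x, f ((1 / 2 : ℝ) • (x + x₀)) = 2 ^ n * ∫ x, f x := by
    rw [integral_add_right_eq_self (fun x => f ((1 / 2 : ℝ) • x)) x₀,
      Measure.integral_comp_smul]
    simp
  have hi : Integrable fun x => f ((1 / 2 : ℝ) • (x + x₀)) :=
    (hf.comp_smul (by norm_num : (1 / 2 : ℝ) ≠ 0)).comp_add_right x₀
  have e3 : mom K (fun _ => 1) ((1 / 2 : ℝ) • y) * Real.exp (inner ℝ x₀ y / 2)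
      ≤ ∫ x, f ((1 / 2 : ℝ) • (x + x₀)) := by
    rw [mom, ← integral_mul_const, ← integral_indicator hK.meas]
    refine integral_mono ((integrable_indicator_iff hK.meas).2 (hK.int (by fun_prop))) hi
      fun x => ?_
    simp only [f, Set.indicator]
    by_cases h : x ∈ K
    · have hm : (1 / 2 : ℝ) • (x + x₀) ∈ K := by
        rw [smul_add]
        exact hK.convex h hx (by norm_num) (by norm_num) (by norm_num)
      rw [if_pos h, if_pos hm, one_mul, ← Real.exp_add]
      refine le_of_eq (congrArg _ ?_)
      rw [inner_smul_right, inner_smul_left, inner_add_left]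
      simp; ring
    · rw [if_neg h]
      split_ifs
      · positivity
      · rfl
  rw [e2, ← e1] at e3
  have hv := hK.vol_pos
  have e4 : Real.exp (phi K ((1 / 2 : ℝ) • y)) * Real.exp (inner ℝ x₀ y / 2)
      ≤ 2 ^ n * Real.exp (phi K y) := by
    rw [hK.exp_phi, hK.exp_phi, div_mul_eq_mul_div, ← mul_div_assoc]
    gcongr
  have e5 : (2 : ℝ) ^ n = Real.exp (n * Real.log 2) := by
    rw [mul_comm, ← Real.rpow_natCast, Real.rpow_def_of_pos two_pos]
  rw [e5, ← Real.exp_add, ← Real.exp_add, Real.exp_le_exp] at e4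
  have := hK.phi_nonneg ((1 / 2 : ℝ) • y)
  linarith

lemma exists_ball (hK : SymBody K) : ∃ r > 0, Metric.closedBall (0 : Euc n) r ⊆ K := by
  obtain ⟨c, hc⟩ := hK.inter
  obtain ⟨ε, hε, h⟩ := Metric.mem_nhds_iff.1 (mem_interior_iff_mem_nhds.1 hc)
  refine ⟨ε / 2, half_pos hε, fun v hv => ?_⟩
  have hv' : ‖v‖ < ε := by
    have : ‖v‖ ≤ ε / 2 := by simpa using hv
    linarith
  have h1 : c + v ∈ K := h (by simpa using hv')
  have h2 : c - v ∈ K := h (by simpa [dist_eq_norm] using hv')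
  have h3 := hK.convex h1 (hK.symm _ h2) (by norm_num : (0 : ℝ) ≤ 1 / 2)
    (by norm_num : (0 : ℝ) ≤ 1 / 2) (by norm_num)
  convert h3 using 1
  module

/-- Apply `inner_le_phi` to a ball contained in `K`. For `y = 0` the point `(r / ‖y‖) • y` is the
origin by the convention on division by zero. -/
lemma coercive (hK : SymBody K) : ∃ c > 0, ∃ C, ∀ y, c * ‖y‖ - C ≤ phi K y := by
  obtain ⟨r, hr, hball⟩ := hK.exists_ball
  refine ⟨r / 2, half_pos hr, n * Real.log 2, fun y => ?_⟩
  have hm : (r / ‖y‖) • y ∈ K := hball (by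
    rcases eq_or_ne y 0 with rfl | hy
    · simpa using hr.le
    · have := norm_pos_iff.2 hy
      rw [mem_closedBall_zero_iff, norm_smul, Real.norm_eq_abs, abs_of_pos (by positivity)]
      exact (div_mul_cancel₀ _ this.ne').le)
  have h := hK.inner_le_phi hm y
  have e : inner ℝ ((r / ‖y‖) • y) y = r * ‖y‖ := by
    rw [inner_smul_left, real_inner_self_eq_norm_sq]
    rcases eq_or_ne y 0 with rfl | hy
    · simp
    · have := norm_pos_iff.2 hy
      simp; field_simp
  rw [e] at h
  linarith

/-- The logarithmic Laplace transform of `K` satisfies the hypotheses of the deformation argument.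
-/
lemma exists_tame (hK : SymBody K) : ∃ D : TameGradient n, D.g = grad K ∧ D.A = hess K := by
  obtain ⟨M, h1, h2, h3⟩ := hK.exists_bounds
  obtain ⟨c, hc, C, h⟩ := hK.coercive
  have line : ∀ (f : Euc n → ℝ) (d : Fin n → ℝ) (a v : Euc n),
      HasFDerivAt f (∑ j, d j • crd j) a → HasLineDerivAt ℝ f (∑ j, d j * v j) a v := by
    intro f d a v hf
    have := hf.hasLineDerivAt v
    simpa [crd_apply] using this
  exact ⟨{ g := grad K, A := hess K, T := third K
           cont_g := hK.cont_grad, cont_A := hK.cont_hess, cont_T := hK.cont_third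
           M := M, bound_g := h1, bound_A := h2, bound_T := h3
           deriv_g := fun a k v => line _ _ a v (hK.hasFDerivAt_grad a k)
           deriv_A := fun a k l v => line _ (fun j => third K a j k l) a v
             (hK.hasFDerivAt_hess a k l)
           A_symm := hess_symm, T_symm := third_symm
           A_psd := hK.hess_psd, c := c, C := C, c_pos := hc
           coercive := fun a => (h a).trans (hK.phi_le_dot a) }, rfl, rfl⟩

lemma integrable_exp_phi (hK : SymBody K) : Integrable fun y => Real.exp (-phi K y) := by
  obtain ⟨c, hc, C, h⟩ := hK.coercive
  obtain ⟨B, hB, hb⟩ := exists_exp_mul_pow_le c hc (n + 1)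
  have hi : Integrable fun y : Euc n => (1 + ‖y‖) ^ (-((n + 1 : ℕ) : ℝ)) :=
    integrable_one_add_norm (by simp)
  refine (hi.const_mul (Real.exp C * B)).mono' (by
    have := hK.cont_phi; exact (by fun_prop : Continuous _).aestronglyMeasurable)
    (Filter.Eventually.of_forall fun y => ?_)
  have hy : 0 < 1 + ‖y‖ := by positivity
  rw [Real.norm_eq_abs, Real.abs_exp, Real.rpow_neg hy.le, Real.rpow_natCast, ← div_eq_mul_inv,
    le_div_iff₀ (by positivity)]
  calc Real.exp (-phi K y) * (1 + ‖y‖) ^ (n + 1)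
      ≤ (Real.exp C * Real.exp (-c * ‖y‖)) * (1 + ‖y‖) ^ (n + 1) := by
        rw [← Real.exp_add]
        gcongr
        linarith [h y]
    _ = Real.exp C * (Real.exp (-c * ‖y‖) * (1 + ‖y‖) ^ (n + 1)) := by ring
    _ ≤ _ := by gcongr; exact hb _ (norm_nonneg _)

end SymBody
end MEll

namespace MEll
variable {n : ℕ}

/-! ### Jacobian integrals and the functional volume product -/

/-- The linear map on Euclidean space given by an array. -/
def clm (A : Fin n → Fin n → ℝ) : Euc n →L[ℝ] Euc n :=
  LinearMap.toContinuousLinearMap (Matrix.toEuclideanLin (Matrix.of A))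

lemma clm_apply (A : Fin n → Fin n → ℝ) (v : Euc n) (k : Fin n) :
    clm A v k = ∑ j, A k j * v j := by
  simp [clm, Matrix.mulVec, dotProduct]

lemma det_clm (A : Fin n → Fin n → ℝ) : (clm A).det = detF A := by
  rw [clm, ContinuousLinearMap.det, LinearMap.coe_toContinuousLinearMap,
    show Matrix.toEuclideanLin (Matrix.of A) = _ from
      congrArg (fun f => f (Matrix.of A)) (Matrix.toLpLin_eq_toLin 2 2), LinearMap.det_toLin, detF]

/-- A map whose derivative is everywhere positive definite is injective, so its Jacobian integrates
to the volume of its image, which is at most that of any `W` containing the image. -/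
lemma lintegral_det_le (G : Euc n → Fin n → ℝ) (B : Euc n → Fin n → Fin n → ℝ)
    (hG : ∀ a k, HasFDerivAt (fun x => G x k) (∑ j, B a k j • crd j) a)
    (pos : ∀ a (v : Fin n → ℝ), v ≠ 0 → 0 < ∑ k, ∑ l, v k * B a k l * v l)
    (W : Set (Euc n)) (hW : ∀ a, WithLp.toLp 2 (G a) ∈ W) :
    ∫⁻ a, ENNReal.ofReal |detF (B a)| ≤ volume W := by
  have hinj : Function.Injective fun a => WithLp.toLp 2 (G a) := by
    intro a b hab
    by_contra hne
    set d : Euc n := b - a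
    have hd : (fun k => d k) ≠ 0 := fun h => hne (by
      have : d = 0 := by ext k; exact congrFun h k
      exact (sub_eq_zero.1 this).symm)
    have hder : ∀ s : ℝ, HasDerivAt (fun s : ℝ => ∑ k, d k * G (a + s • d) k)
        (∑ k, ∑ l, d k * B (a + s • d) k l * d l) s := by
      intro s
      refine HasDerivAt.fun_sum fun k _ => ?_
      have hl : HasDerivAt (fun s : ℝ => a + s • d) d s := by
        have := ((hasDerivAt_id s).smul_const d).const_add a
        rwa [one_smul] at this
      refine (((hG (a + s • d) k).comp_hasDerivAt s hl).const_mul (d k)).congr_deriv ?_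
      simp only [sum_apply, smul_apply, crd_apply, smul_eq_mul, Finset.mul_sum]
      exact Finset.sum_congr rfl fun j _ => by ring
    have hmono := strictMono_of_deriv_pos (f := fun s : ℝ => ∑ k, d k * G (a + s • d) k)
      fun s => by
        rw [(hder s).deriv]
        exact pos _ (fun k => d k) hd
    have h01 := hmono (zero_lt_one)
    have e : a + (1 : ℝ) • d = b := by simp [d]
    have hG' : G a = G b := WithLp.toLp_injective 2 hab
    simp only [e, zero_smul, add_zero, hG'] at h01
    exact lt_irrefl _ h01
  have hd : ∀ a ∈ Set.univ, HasFDerivWithinAt (fun a => WithLp.toLp 2 (G a)) (clm (B a))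
      Set.univ a := by
    intro a _
    refine hasFDerivWithinAt_euclidean.2 fun k => ?_
    refine ((hG a k).congr_fderiv ?_).hasFDerivWithinAt
    ext v
    simp [sum_apply, smul_apply, crd_apply, clm_apply]
  have h := lintegral_abs_det_fderiv_eq_addHaar_image volume MeasurableSet.univ hd hinj.injOn
  simp only [det_clm, Measure.restrict_univ] at h
  rw [h]
  exact measure_mono (by rintro _ ⟨a, _, rfl⟩; exact hW a)

/-- The change of variables `(a, b) ↦ (a, a + b)`. -/
lemma lintegral_shear (k : Euc n → ℝ≥0∞) (D : Euc n × Euc n → ℝ≥0∞) (hk : Measurable k)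
    (hD : Measurable D) :
    ∫⁻ z : Euc n × Euc n, k (z.1 + z.2) * D z = ∫⁻ x, k x * ∫⁻ a, D (a, x - a) := by
  have m3 : Measurable fun z : Euc n × Euc n => D (z.1, z.2 - z.1) :=
    hD.comp (measurable_fst.prodMk (measurable_snd.sub measurable_fst))
  have m4 : Measurable (Function.uncurry fun a x : Euc n => k x * D (a, x - a)) :=
    (hk.comp measurable_snd).mul m3
  have m2 : Measurable fun z : Euc n × Euc n => k (z.1 + z.2) * D z :=
    (hk.comp (measurable_fst.add measurable_snd)).mul hD
  have e1 : ∀ a : Euc n, ∫⁻ b, k (a + b) * D (a, b) = ∫⁻ x, k x * D (a, x - a) := by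
    intro a
    refine (lintegral_sub_right_eq_self (fun b => k (a + b) * D (a, b)) a).symm.trans ?_
    simp only [add_sub_cancel]
  rw [Measure.volume_eq_prod, lintegral_prod _ m2.aemeasurable]
  simp only [e1]
  rw [lintegral_lintegral_swap m4.aemeasurable]
  refine lintegral_congr fun x => ?_
  rw [lintegral_const_mul]
  exact m3.comp (measurable_id.prodMk measurable_const)

namespace SymBody

variable {K : Set (Euc n)}

/-- The barycentre of a probability measure on a compact convex set belongs to that set. -/
lemma grad_mem (hK : SymBody K) (y : Euc n) : WithLp.toLp 2 (grad K y) ∈ K := by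
  have := hK.prob y
  have hi : Integrable (fun x : Euc n => x) (tm K y) := by
    rw [tm, integrable_tilted_iff (hK.int (by fun_prop))]
    exact (by fun_prop : Continuous fun x : Euc n =>
      Real.exp (inner ℝ x y) • x).continuousOn.integrableOn_compact hK.compact
  have h := hK.convex.integral_mem hK.compact.isClosed (hK.ae_mem y) hi
  convert h using 1
  ext k
  exact (crd k).integral_comp_comm hi

/-- The gradient of `φ` is an injective map into `K`. -/
lemma lintegral_det_hess_le (hK : SymBody K) : ∫⁻ a, ENNReal.ofReal |detF (hess K a)| ≤ volume K :=
  lintegral_det_le (grad K) (hess K) hK.hasFDerivAt_grad hK.hess_pos K hK.grad_mem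

/-- The map `a ↦ ∇φ(a) - ∇φ(x - a)` has derivative `∇²φ(a) + ∇²φ(x - a)` and takes values in
`K - K = 2K`. -/
lemma lintegral_det_hess_add_le (hK : SymBody K) (x : Euc n) :
    ∫⁻ a, ENNReal.ofReal |detF (hess K a + hess K (x - a))| ≤ 2 ^ n * volume K := by
  have hv : volume ((2 : ℝ) • K) = 2 ^ n * volume K := by
    rw [Measure.addHaar_smul]
    simp [abs_of_nonneg, ENNReal.ofReal_pow]
  rw [← hv]
  refine lintegral_det_le (fun a k => grad K a k - grad K (x - a) k)
    (fun a => hess K a + hess K (x - a)) (fun a k => ?_) (fun a v hv => ?_) _ fun a => ?_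
  · refine ((hK.hasFDerivAt_grad a k).sub ((hK.hasFDerivAt_grad (x - a) k).comp a
      ((hasFDerivAt_id a).const_sub x))).congr_fderiv ?_
    ext v
    simp [sum_apply, smul_apply, crd_apply, add_mul, Finset.sum_add_distrib]
  · have h1 := hK.hess_pos a v hv
    have h2 := hK.hess_pos (x - a) v hv
    simp only [Pi.add_apply, mul_add, add_mul, Finset.sum_add_distrib]
    exact add_pos h1 h2
  · have h1 := hK.convex (hK.grad_mem a) (hK.symm _ (hK.grad_mem (x - a)))
      (by norm_num : (0 : ℝ) ≤ 1 / 2) (by norm_num : (0 : ℝ) ≤ 1 / 2) (by norm_num)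
    refine Set.mem_smul_set.2 ⟨_, h1, ?_⟩
    ext k
    simp; ring

/-- A lower bound for the volume product of `K` in functional form: `exp (-φ)` stands for the
indicator of the polar body, and the constant per dimension is absolute. -/
lemma integral_exp_phi_ge (hK : SymBody K) :
    Real.pi ^ n ≤ volume.real K * ∫ y, Real.exp (-phi K y) := by
  obtain ⟨D, hg, hA⟩ := hK.exists_tame
  have hlb := D.lower_bound
  simp only [hg, hA] at hlb
  have hphi := hK.cont_phi
  have hh := hK.cont_hess
  have hdet := contDiff_detF (n := n).continuous
  have c1 : Continuous fun x : Euc n => ENNReal.ofReal (Real.exp (-phi K ((1 / 2 : ℝ) • x))) :=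
    ENNReal.continuous_ofReal.comp (by fun_prop)
  have c2 : Continuous fun z : Euc n × Euc n => ENNReal.ofReal |detF (hess K z.1 + hess K z.2)| :=
    ENNReal.continuous_ofReal.comp (hdet.comp
      ((hh.comp continuous_fst).add (hh.comp continuous_snd))).abs
  -- `⟨a, ∇φ(a)⟩ ≥ φ(a)` and convexity turn the weight into a function of `x + x'` only
  have step1 : ∫⁻ x : Euc n × Euc n,
      ENNReal.ofReal (Real.exp (-(1 / 2)
        * (∑ k, x.1 k * grad K x.1 k + ∑ k, x.2 k * grad K x.2 k)))
        * ENNReal.ofReal |detF (hess K x.1 + hess K x.2)|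
      ≤ ∫⁻ x : Euc n × Euc n, ENNReal.ofReal (Real.exp (-phi K ((1 / 2 : ℝ) • (x.1 + x.2))))
        * ENNReal.ofReal |detF (hess K x.1 + hess K x.2)| := by
    refine lintegral_mono fun x => ?_
    gcongr
    have := hK.phi_mid x.1 x.2
    have := hK.phi_le_dot x.1
    have := hK.phi_le_dot x.2
    linarith
  have step2 : ∫⁻ x : Euc n × Euc n, ENNReal.ofReal (Real.exp (-phi K ((1 / 2 : ℝ) • (x.1 + x.2))))
        * ENNReal.ofReal |detF (hess K x.1 + hess K x.2)|
      = ∫⁻ x : Euc n, ENNReal.ofReal (Real.exp (-phi K ((1 / 2 : ℝ) • x)))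
        * ∫⁻ a : Euc n, ENNReal.ofReal |detF (hess K a + hess K (x - a))| := by
    exact lintegral_shear _ _ c1.measurable c2.measurable
  have step3 : ∫⁻ x : Euc n, ENNReal.ofReal (Real.exp (-phi K ((1 / 2 : ℝ) • x)))
        * ∫⁻ a : Euc n, ENNReal.ofReal |detF (hess K a + hess K (x - a))|
      ≤ (∫⁻ x : Euc n, ENNReal.ofReal (Real.exp (-phi K ((1 / 2 : ℝ) • x))))
        * (2 ^ n * volume K) := by
    rw [← lintegral_mul_const _ c1.measurable]
    exact lintegral_mono fun x => by gcongr; exact hK.lintegral_det_hess_add_le x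
  have hi : Integrable fun x => Real.exp (-phi K ((1 / 2 : ℝ) • x)) :=
    hK.integrable_exp_phi.comp_smul (by norm_num : (1 / 2 : ℝ) ≠ 0)
  have e4 : ∫⁻ x : Euc n, ENNReal.ofReal (Real.exp (-phi K ((1 / 2 : ℝ) • x)))
      = ENNReal.ofReal (2 ^ n * ∫ y, Real.exp (-phi K y)) := by
    rw [← ofReal_integral_eq_lintegral_ofReal hi
      (Filter.Eventually.of_forall fun x => (Real.exp_pos _).le),
      Measure.integral_comp_smul volume fun y => Real.exp (-phi K y)]
    simp
  have h := hlb.trans (step1.trans (step2.le.trans step3))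
  have hJ : 0 ≤ ∫ y, Real.exp (-phi K y) := integral_nonneg fun _ => (Real.exp_pos _).le
  have e5 : (2 : ℝ≥0∞) ^ n * volume K = ENNReal.ofReal (2 ^ n * volume.real K) := by
    rw [ENNReal.ofReal_mul (by positivity), ENNReal.ofReal_pow (by norm_num), Measure.real,
      ENNReal.ofReal_toReal hK.compact.measure_lt_top.ne]
    simp
  have hv := hK.vol_pos
  rw [e4, e5, ← ENNReal.ofReal_mul (by positivity), ENNReal.ofReal_le_ofReal_iff (by positivity)]
    at h
  have e6 : (4 * Real.pi) ^ n = 2 ^ n * 2 ^ n * Real.pi ^ n := by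
    rw [mul_pow, show (4 : ℝ) = 2 * 2 by norm_num, mul_pow]
  rw [e6] at h
  have h2 : (0 : ℝ) < 2 ^ n * 2 ^ n := by positivity
  refine le_of_mul_le_mul_left (h.trans (le_of_eq ?_)) h2
  ring

/-- Some tilt `y` has both small `φ` and small covariance determinant: the set `Y = {φ ≤ 2n}` has
volume at least `πⁿ / (2 · 2ⁿ |K|)` by the volume product inequality, whereas the determinant
integrates to at most `|K|`. -/
lemma exists_tilt (hK : SymBody K) (hn : 1 ≤ n) : ∃ y, phi K y ≤ 2 * n ∧
    detF (hess K y) ≤ 4 * (2 / Real.pi) ^ n * volume.real K ^ 2 := by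
  set V := volume.real K
  have hV : 0 < V := hK.vol_pos
  have hphi := hK.cont_phi
  set J := ∫ y, Real.exp (-phi K y)
  have hi := hK.integrable_exp_phi
  have hJ : 0 ≤ J := integral_nonneg fun _ => (Real.exp_pos _).le
  set Y : Set (Euc n) := {y | phi K y ≤ 2 * n}
  have hYm : MeasurableSet Y := (isClosed_le hphi continuous_const).measurableSet
  have hYi : Integrable (Y.indicator fun _ => (1 : ℝ)) := by
    refine (hi.const_mul (Real.exp (2 * n))).mono'
      (measurable_const.indicator hYm).aestronglyMeasurable
      (Filter.Eventually.of_forall fun y => ?_)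
    rw [← Real.exp_add]
    by_cases h : y ∈ Y
    · have : phi K y ≤ 2 * n := h
      simp only [Set.indicator_of_mem h, norm_one]
      exact Real.one_le_exp (by linarith)
    · simp only [Set.indicator_of_notMem h, norm_zero]
      positivity
  have hYf : volume Y ≠ ⊤ := by
    have := (integrable_indicator_iff hYm).1 hYi
    rw [integrableOn_const_iff] at this
    exact (this.resolve_left (by simp)).ne
  have hi2 : Integrable fun y => Real.exp (-(2 * phi K y)) :=
    hi.mono' (by fun_prop : Continuous _).aestronglyMeasurable
      (Filter.Eventually.of_forall fun y => by
        rw [Real.norm_eq_abs, Real.abs_exp, Real.exp_le_exp]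
        linarith [hK.phi_nonneg y])
  -- replace `exp (-φ)` by `exp (-2φ)`, which costs a factor `2ⁿ` because `2φ(y) ≤ φ(2y)`
  have s1 : (2 ^ n)⁻¹ * J ≤ ∫ y, Real.exp (-(2 * phi K y)) := by
    have e : ∫ y, Real.exp (-phi K ((2 : ℝ) • y)) = (2 ^ n)⁻¹ * J := by
      rw [Measure.integral_comp_smul volume fun y => Real.exp (-phi K y)]
      simp [J]
    rw [← e]
    refine integral_mono (hi.comp_smul two_ne_zero) hi2 fun y => Real.exp_le_exp.2 ?_
    linarith [hK.phi_two y]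
  -- outside `Y` the extra factor `exp (-φ)` is smaller than `exp (-2n)`
  have s2 : ∫ y, Real.exp (-(2 * phi K y)) ≤ volume.real Y + Real.exp (-2 * n) * J := by
    have e : volume.real Y = ∫ y, Y.indicator (fun _ => (1 : ℝ)) y := by
      rw [integral_indicator hYm]; simp
    rw [e, ← integral_const_mul, ← integral_add hYi (hi.const_mul _)]
    refine integral_mono hi2 (hYi.add (hi.const_mul _)) fun y => ?_
    have h0 := hK.phi_nonneg y
    have hp : 0 < Real.exp (-2 * n) * Real.exp (-phi K y) := by positivity
    by_cases h : y ∈ Y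
    · simp only [Set.indicator_of_mem h]
      have : Real.exp (-(2 * phi K y)) ≤ 1 := Real.exp_le_one_iff.2 (by linarith)
      linarith
    · simp only [Set.indicator_of_notMem h, zero_add]
      rw [← Real.exp_add, Real.exp_le_exp]
      have : 2 * n < phi K y := not_le.1 h
      linarith
  -- the contribution from outside `Y` is absorbed since `2 / e² ≤ 1/2`
  have s3 : 2 ^ n * Real.exp (-2 * n) ≤ 1 / 2 := by
    have e1 : Real.exp (-2 * n) = Real.exp (-2) ^ n := by rw [← Real.exp_nat_mul]; ring_nf
    have e2 : 2 * Real.exp (-2) ≤ 1 / 2 := by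
      have : Real.exp (-2) = (Real.exp 1 * Real.exp 1)⁻¹ := by
        rw [← Real.exp_add, ← Real.exp_neg]; norm_num
      have h4 : (4 : ℝ) ≤ Real.exp 1 * Real.exp 1 := by
        have := Real.exp_one_gt_d9
        nlinarith
      have := inv_anti₀ (by norm_num) h4
      linarith
    rw [e1, ← mul_pow]
    calc (2 * Real.exp (-2)) ^ n ≤ (2 * Real.exp (-2)) ^ 1 :=
          pow_le_pow_of_le_one (by positivity) (by linarith) hn
      _ ≤ _ := by simpa using e2
  have s4 : J ≤ 2 * 2 ^ n * volume.real Y := by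
    have h1 := s1.trans s2
    rw [inv_mul_le_iff₀ (by positivity)] at h1
    have h2 := mul_le_mul_of_nonneg_right s3 hJ
    linarith
  have s5 : Real.pi ^ n ≤ 2 * 2 ^ n * V * volume.real Y := by
    have h1 := hK.integral_exp_phi_ge
    have h2 := mul_le_mul_of_nonneg_left s4 hV.le
    calc _ ≤ _ := h1
      _ ≤ _ := h2
      _ = _ := by ring
  -- otherwise the determinant exceeds `c` throughout `Y` and its integral exceeds `|K|`
  by_contra! hcon
  set c := 4 * (2 / Real.pi) ^ n * V ^ 2 with hc
  have hc0 : 0 < c := by positivity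
  have h1 : ENNReal.ofReal c * volume Y ≤ volume K := by
    rw [← setLIntegral_const]
    refine le_trans ?_ ((setLIntegral_le_lintegral Y _).trans hK.lintegral_det_hess_le)
    exact setLIntegral_mono' hYm fun y hy => ENNReal.ofReal_le_ofReal
      ((hcon y hy).le.trans (le_abs_self _))
  have h2 : c * volume.real Y ≤ V := by
    have := ENNReal.toReal_mono hK.compact.measure_lt_top.ne h1
    rwa [ENNReal.toReal_mul, ENNReal.toReal_ofReal hc0.le] at this
  have h3 : 2 * V * Real.pi ^ n ≤ c * volume.real Y * Real.pi ^ n := by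
    have e : c * Real.pi ^ n = 4 * 2 ^ n * V ^ 2 := by
      rw [hc, div_pow]; field_simp
    have h4 := mul_le_mul_of_nonneg_left s5 (by positivity : 0 ≤ 2 * V)
    calc _ ≤ _ := h4
      _ = (4 * 2 ^ n * V ^ 2) * volume.real Y := by ring
      _ = _ := by rw [← e]; ring
  have h5 := le_of_mul_le_mul_right h3 (by positivity)
  linarith

end SymBody
end MEll

namespace MEll
variable {n : ℕ}

/-! ### The covariance ellipsoid -/

/-- A nondegenerate ellipsoid is a linear preimage of the unit ball. -/
lemma ellipsoid_eq_preimage {A : Matrix (Fin n) (Fin n) ℝ} (hA : A.PosDef) :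
    ∃ B : Fin n → Fin n → ℝ, detF B ^ 2 = A.det ∧
      ellipsoid A = clm B ⁻¹' Metric.closedBall 0 1 := by
  open scoped MatrixOrder in
  obtain ⟨B, hB⟩ := CStarAlgebra.nonneg_iff_eq_star_mul_self.mp hA.posSemidef.nonneg
  refine ⟨B, ?_, ?_⟩
  · rw [hB, Matrix.det_mul, Matrix.star_eq_conjTranspose, Matrix.det_conjTranspose, star_trivial,
      pow_two]
    rfl
  · ext x
    have e : ∑ i, ∑ j, x i * A i j * x j = ‖clm B x‖ ^ 2 := by
      rw [EuclideanSpace.real_norm_sq_eq]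
      have hc : ∀ k, clm B x k = ∑ j, B k j * x j := fun k => clm_apply _ _ _
      simp only [hc, hB, Matrix.mul_apply, Matrix.star_apply, star_trivial, pow_two,
        Finset.sum_mul, Finset.mul_sum]
      have h : ∀ i j k, x i * (B k i * B k j) * x j = B k j * x j * (B k i * x i) :=
        fun i j k => by ring
      simp only [h]
      have h2 : ∀ i : Fin n, ∑ j, ∑ k, B k j * x j * (B k i * x i)
          = ∑ k, ∑ j, B k j * x j * (B k i * x i) := fun i => Finset.sum_comm
      simp only [h2]
      exact Finset.sum_comm
    rw [ellipsoid, Set.mem_ofPred_eq, e, Set.mem_preimage, mem_closedBall_zero_iff]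
    constructor
    · intro h
      by_contra! h1
      nlinarith
    · intro h
      nlinarith [norm_nonneg (clm B x)]

/-- Compare the unit ball, scaled to radius `√(2n)`, with the Gaussian integral: on the scaled ball
`exp (-‖x‖² / 2) ≥ exp (-n)`. -/
lemma volume_closedBall_le (hn : 1 ≤ n) :
    √(2 * n) ^ n * volume.real (Metric.closedBall (0 : Euc n) 1)
      ≤ Real.exp n * √(2 * Real.pi) ^ n := by
  have hn' : (0 : ℝ) < n := by exact_mod_cast hn
  set r := √(2 * n : ℝ) with hr
  have hr0 : 0 ≤ r := Real.sqrt_nonneg _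
  have hr2 : r ^ 2 = 2 * n := Real.sq_sqrt (by positivity)
  have e1 : volume.real (Metric.closedBall (0 : Euc n) r)
      = r ^ n * volume.real (Metric.closedBall (0 : Euc n) 1) := by
    have : Nonempty (Fin n) := ⟨⟨0, hn⟩⟩
    rw [Measure.real, Measure.real, Measure.addHaar_closedBall _ _ hr0,
      Measure.addHaar_closedBall _ _ zero_le_one]
    simp [ENNReal.toReal_mul, hr0]
  rw [← e1]
  have hg : ∫ a : Euc n, Real.exp (-(1 / 2) * ‖a‖ ^ 2) = √(2 * Real.pi) ^ n := by
    rw [GaussianFourier.integral_rexp_neg_mul_sq_norm (by norm_num)]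
    simp only [finrank_euclideanSpace, Fintype.card_fin]
    rw [Real.sqrt_eq_rpow, ← Real.rpow_natCast, ← Real.rpow_mul (by positivity)]
    congr 1 <;> ring
  have hgi : Integrable fun a : Euc n => Real.exp (-(1 / 2) * ‖a‖ ^ 2) := by
    by_contra h
    rw [integral_undef h] at hg
    have : 0 < √(2 * Real.pi) ^ n := by positivity
    linarith
  rw [← hg, ← integral_const_mul, ← integral_indicator_one Metric.isClosed_closedBall.measurableSet]
  refine integral_mono_of_nonneg ?_ (hgi.const_mul _) ?_
  · exact Filter.Eventually.of_forall fun x => Set.indicator_nonneg (fun _ _ => zero_le_one) x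
  · refine Filter.Eventually.of_forall fun x => ?_
    by_cases h : x ∈ Metric.closedBall (0 : Euc n) r
    · simp only [Set.indicator_of_mem h, Pi.one_apply]
      rw [← Real.exp_add]
      rw [mem_closedBall_zero_iff] at h
      refine Real.one_le_exp ?_
      nlinarith [norm_nonneg x]
    · simp only [Set.indicator_of_notMem h]
      positivity

lemma volume_ellipsoid {A : Matrix (Fin n) (Fin n) ℝ} (hA : A.PosDef) :
    volume.real (ellipsoid A) = √(A.det)⁻¹ * volume.real (Metric.closedBall (0 : Euc n) 1) := by
  obtain ⟨B, hB, hE⟩ := ellipsoid_eq_preimage hA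
  have hB0 : detF B ≠ 0 := fun h => by
    have := hA.det_pos
    rw [← hB, h] at this
    simp at this
  have hd : LinearMap.det (clm B : Euc n →ₗ[ℝ] Euc n) = detF B := det_clm B
  have := Measure.addHaar_preimage_linearMap (volume : Measure (Euc n))
    (f := (clm B : Euc n →ₗ[ℝ] Euc n)) (by rwa [hd]) (Metric.closedBall 0 1)
  rw [hE, Measure.real]
  erw [this]
  rw [ENNReal.toReal_mul, ENNReal.toReal_ofReal (abs_nonneg _), hd, ← hB, ← inv_pow,
    Real.sqrt_sq_eq_abs]
  rfl

namespace SymBody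
variable {K : Set (Euc n)}

lemma posDef_hess (hK : SymBody K) (y : Euc n) : (Matrix.of (hess K y)).PosDef := by
  refine Matrix.PosDef.of_dotProduct_mulVec_pos ?_ fun v hv => ?_
  · ext k l
    simp only [Matrix.conjTranspose_apply, Matrix.of_apply, star_trivial, hess_symm y l k]
  · refine (hK.hess_pos y v hv).trans_eq ?_
    simp only [dotProduct, Matrix.mulVec, Finset.mul_sum, Matrix.of_apply, Pi.star_apply,
      star_trivial]
    exact Finset.sum_congr rfl fun k _ => Finset.sum_congr rfl fun l _ => by ring

/-- The tilted measure has density at most `exp (φ(y) + 2n log 2) / |K|`, because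
`⟨x, y⟩ ≤ 2φ(y) + 2n log 2` on `K`. -/
lemma tm_le (hK : SymBody K) (y : Euc n) {S : Set (Euc n)} (hS : MeasurableSet S) :
    (tm K y).real S ≤ Real.exp (phi K y + 2 * n * Real.log 2) / volume.real K
      * volume.real (S ∩ K) := by
  set V := volume.real K
  have hV : 0 < V := hK.vol_pos
  have hfin : volume (S ∩ K) ≠ ⊤ :=
    ((measure_mono Set.inter_subset_right).trans_lt hK.compact.measure_lt_top).ne
  have hm : ∫ x in K, Real.exp (inner ℝ x y) = Real.exp (phi K y) * V := by
    rw [hK.exp_phi, div_mul_cancel₀ _ hV.ne']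
    simp [mom]
  have h : tm K y S ≤ ENNReal.ofReal (Real.exp (phi K y + 2 * n * Real.log 2) / V)
      * volume (S ∩ K) := by
    rw [tm, tilted_apply' _ _ hS, Measure.restrict_restrict hS, ← setLIntegral_const]
    refine setLIntegral_mono' (hS.inter hK.meas) fun x hx => ENNReal.ofReal_le_ofReal ?_
    rw [hm, ← div_div, ← Real.exp_sub]
    gcongr
    linarith [hK.inner_le_phi hx.2 y]
  have h2 := ENNReal.toReal_mono (ENNReal.mul_ne_top ENNReal.ofReal_ne_top hfin) h
  rwa [ENNReal.toReal_mul, ENNReal.toReal_ofReal (by positivity)] at h2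

/-- The quadratic form dual to the covariance of the tilted measure defines an ellipsoid whose
volume is at most exponentially larger than that of `K` and which, centred at the barycentre `b`,
shares at least an exponentially small proportion of the volume of `K`. -/
lemma exists_ellipsoid (hK : SymBody K) (hn : 1 ≤ n) :
    ∃ (A : Matrix (Fin n) (Fin n) ℝ) (b : Euc n), A.PosDef ∧
    volume.real K * Real.exp (-(4 * n)) / 2 ≤ volume.real ({x | x - b ∈ ellipsoid A} ∩ K) ∧
    volume.real (ellipsoid A) ≤ 2 * (2 * Real.exp 1) ^ n * volume.real K := by
  set V := volume.real K with hVd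
  have hV : 0 < V := hK.vol_pos
  have hn' : (0 : ℝ) < n := by exact_mod_cast hn
  obtain ⟨y, hy, hdet⟩ := hK.exists_tilt hn
  set H := Matrix.of (hess K y) with hH
  have hHp : H.PosDef := hK.posDef_hess y
  set A : Matrix (Fin n) (Fin n) ℝ := (1 / (2 * n) : ℝ) • H⁻¹ with hA
  have hAp : A.PosDef := hHp.inv.smul (by positivity)
  refine ⟨A, WithLp.toLp 2 (grad K y), hAp, ?_, ?_⟩
  · set S := {x : Euc n | x - WithLp.toLp 2 (grad K y) ∈ ellipsoid A} with hSd
    let q : Euc n → ℝ := fun x => ∑ k, ∑ l, (x k - grad K y k) * A k l * (x l - grad K y l)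
    have hq : Continuous q := by fun_prop
    have hSq : S = {x | q x ≤ 1} := rfl
    have hS : MeasurableSet S := by
      rw [hSq]; exact (isClosed_le hq continuous_const).measurableSet
    -- the expectation of `q` is `tr (Cov⁻¹ Cov) / (2n)`
    have hEq : ∫ x, q x ∂(tm K y) = 1 / 2 := by
      have h1 := hK.sum_hess y A
      have h2 : ∑ k, ∑ l, A k l * hess K y k l = (A * H).trace := by
        simp only [Matrix.trace, Matrix.diag, Matrix.mul_apply, hH, Matrix.of_apply]
        exact Finset.sum_congr rfl fun k _ => Finset.sum_congr rfl fun l _ => by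
          rw [hess_symm y k l]
      rw [h2, hA, Matrix.smul_mul, Matrix.nonsing_inv_mul _ hHp.det_pos.ne'.isUnit,
        Matrix.trace_smul, Matrix.trace_one, Fintype.card_fin, smul_eq_mul] at h1
      rw [show ∫ x, q x ∂(tm K y) = ex K q y from rfl, ← h1]
      field_simp
    have hq0 : ∀ x, 0 ≤ q x := fun x => by
      have := hAp.posSemidef.dotProduct_mulVec_nonneg (fun k => x k - grad K y k)
      refine this.trans_eq ?_
      simp only [dotProduct, Matrix.mulVec, Finset.mul_sum, Pi.star_apply, star_trivial, q]
      exact Finset.sum_congr rfl fun k _ => Finset.sum_congr rfl fun l _ => by ring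
    have hP := hK.prob y
    -- Markov's inequality at level `1`
    have hM := mul_meas_ge_le_integral_of_nonneg (Filter.Eventually.of_forall hq0)
      (hK.int_tm hq y) 1
    rw [hEq, one_mul] at hM
    have hSc : (tm K y).real Sᶜ ≤ 1 / 2 := by
      refine le_trans (measureReal_mono ?_) hM
      intro x hx
      have : ¬ q x ≤ 1 := hx
      exact (not_le.1 this).le
    rw [probReal_compl_eq_one_sub hS] at hSc
    have h3 := hK.tm_le y hS
    have h4 : Real.exp (phi K y + 2 * n * Real.log 2) ≤ Real.exp (4 * n) := by
      rw [Real.exp_le_exp]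
      nlinarith [Real.log_two_lt_d9]
    have h5 : 1 / 2 ≤ Real.exp (4 * n) / V * volume.real (S ∩ K) := by
      calc (1 / 2 : ℝ) ≤ _ := by linarith
        _ ≤ _ := h3
        _ ≤ _ := by gcongr
    rw [Real.exp_neg]
    have h6 := Real.exp_pos (4 * n)
    field_simp at h5 ⊢
    linarith
  · rw [volume_ellipsoid hAp]
    have hd : (A.det)⁻¹ = (2 * n) ^ n * H.det := by
      rw [hA, Matrix.det_smul, Matrix.det_nonsing_inv, Ring.inverse_eq_inv', Fintype.card_fin,
        mul_inv, inv_inv, one_div, inv_pow, inv_inv]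
    rw [hd, Real.sqrt_mul (by positivity)]
    have e1 : √((2 * n : ℝ) ^ n) = √(2 * n) ^ n :=
      Real.sqrt_eq_iff_mul_self_eq_of_pos (by positivity) |>.2 (by
        rw [← mul_pow, Real.mul_self_sqrt (by positivity)])
    have e2 : √H.det ≤ 2 * √(2 / Real.pi) ^ n * V := by
      refine Real.sqrt_le_iff.2 ⟨by positivity, hdet.trans_eq ?_⟩
      rw [mul_pow, mul_pow, ← pow_mul, mul_comm n 2, pow_mul, Real.sq_sqrt (by positivity)]
      ring
    have e3 : √(2 / Real.pi) * √(2 * Real.pi) = 2 := by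
      rw [← Real.sqrt_mul (by positivity), Real.sqrt_eq_iff_mul_self_eq_of_pos (by norm_num)]
      field_simp
    have h1 := volume_closedBall_le hn
    calc √((2 * n : ℝ) ^ n) * √H.det * volume.real (Metric.closedBall (0 : Euc n) 1)
        = √H.det * (√(2 * n) ^ n * volume.real (Metric.closedBall (0 : Euc n) 1)) := by
          rw [e1]; ring
      _ ≤ (2 * √(2 / Real.pi) ^ n * V) * (Real.exp n * √(2 * Real.pi) ^ n) := by gcongr
      _ = 2 * (√(2 / Real.pi) * √(2 * Real.pi)) ^ n * Real.exp n * V := by ring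
      _ = 2 * (2 * Real.exp 1) ^ n * V := by
          rw [e3, mul_pow, ← Real.exp_nat_mul, mul_one]; ring

end SymBody
end MEll

namespace MEll
variable {n : ℕ}

/-! ### Covering numbers -/

lemma volume_homothet (S : Set (Euc n)) (v : Euc n) {r : ℝ} (hr : 0 ≤ r) :
    volume ((fun x => x + v) ⁻¹' (r • S)) = ENNReal.ofReal (r ^ n) * volume S := by
  rw [measure_preimage_add_right, Measure.addHaar_smul, finrank_euclideanSpace, Fintype.card_fin,
    abs_of_nonneg (by positivity)]

/-- Volumetric covering bound: a maximal family of points of `A` whose translates of `½T` are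
disjoint provides a covering of `A` by translates of `½(T - T)`. It suffices that `W` contain the
translate by `c` of `½(T - T)`, and `R` bounds the number of disjoint copies of `½T` inside `B`. -/
lemma coveringNumber_le {A T W B : Set (Euc n)} (c : Euc n) {R : ℝ} (hT : MeasurableSet T)
    (hT0 : 0 < volume.real T) (hB : volume B ≠ ⊤)
    (hsub : ∀ a ∈ A, ∀ t ∈ T, a + (1 / 2 : ℝ) • t ∈ B)
    (hW : ∀ t ∈ T, ∀ t' ∈ T, (1 / 2 : ℝ) • (t - t') + c ∈ W)
    (hR : 2 ^ n * volume.real B ≤ R * volume.real T) :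
    (coveringNumber A W : ℝ≥0∞) ≤ ENNReal.ofReal R := by
  classical
  -- `D a = a + ½T`
  let D : Euc n → Set (Euc n) := fun a => (fun x => x + -a) ⁻¹' ((1 / 2 : ℝ) • T)
  have hDmem : ∀ a x, x ∈ D a ↔ ∃ t ∈ T, x = a + (1 / 2 : ℝ) • t := fun a x => by
    simp only [D, Set.mem_preimage, Set.mem_smul_set]
    constructor
    · rintro ⟨t, ht, h⟩
      exact ⟨t, ht, by rw [h]; abel⟩
    · rintro ⟨t, ht, h⟩
      exact ⟨t, ht, by rw [h]; abel⟩
  have hDv : ∀ a, volume.real (D a) = (1 / 2) ^ n * volume.real T := fun a => by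
    rw [Measure.real, volume_homothet _ _ (by norm_num), ENNReal.toReal_mul,
      ENNReal.toReal_ofReal (by positivity)]
    rfl
  have hDm : ∀ a, MeasurableSet (D a) := fun a =>
    (hT.const_smul₀ _).preimage (by fun_prop)
  -- `P m`: there are `m` points of `A` with disjoint translates of `½T`
  let P : ℕ → Prop := fun m => ∃ Λ : Finset (Euc n), Λ.card = m ∧ ↑Λ ⊆ A ∧
    (Λ : Set (Euc n)).PairwiseDisjoint D
  have hPb : ∀ m, P m → (m : ℝ) ≤ R := by
    rintro m ⟨Λ, rfl, hA, hd⟩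
    have hU : (⋃ a ∈ Λ, D a) ⊆ B := by
      intro x hx
      simp only [Set.mem_iUnion] at hx
      obtain ⟨a, ha, hx⟩ := hx
      obtain ⟨t, ht, rfl⟩ := (hDmem _ _).1 hx
      exact hsub a (hA ha) t ht
    have h1 : volume.real (⋃ a ∈ Λ, D a) ≤ volume.real B := measureReal_mono hU hB
    have h2 : volume.real (⋃ a ∈ Λ, D a) = ∑ a ∈ Λ, volume.real (D a) :=
      measureReal_biUnion_finset hd (fun a _ => hDm a) (fun a ha => ((measure_mono
        ((Set.subset_biUnion_of_mem (u := D) (Finset.mem_coe.2 ha)).trans hU)).trans_lt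
          hB.lt_top).ne)
    simp only [hDv, Finset.sum_const, nsmul_eq_mul] at h2
    rw [h2, one_div, inv_pow] at h1
    refine le_of_mul_le_mul_right (le_trans ?_ hR) hT0
    calc (Λ.card : ℝ) * volume.real T
        = 2 ^ n * (Λ.card * ((2 ^ n)⁻¹ * volume.real T)) := by field_simp
      _ ≤ _ := by gcongr
  obtain ⟨m, hm, hm'⟩ : ∃ m, P m ∧ ¬ P (m + 1) := by
    by_contra! h
    have hall : ∀ m, P m := fun m => by
      induction m with
      | zero => exact ⟨∅, by simp⟩
      | succ k ih => exact h k ih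
    obtain ⟨m, hm⟩ := exists_nat_gt R
    exact absurd (hPb m (hall m)) (not_le.2 hm)
  have hmR := hPb m hm
  obtain ⟨Λ, hΛ, hA, hd⟩ := hm
  have hcov : A ⊆ ↑(Λ.image fun x => x - c) + W := by
    intro a ha
    -- by maximality `D a` meets some `D l`, so that `a - l ∈ ½(T - T)`
    obtain ⟨l, hl, hla⟩ : ∃ l ∈ Λ, ¬ Disjoint (D a) (D l) := by
      by_contra! h
      have hne : (D a).Nonempty := by
        rw [Set.nonempty_iff_ne_empty]
        intro h0
        have := hDv a
        rw [h0, measureReal_empty] at this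
        have : 0 < (1 / 2 : ℝ) ^ n * volume.real T := by positivity
        linarith
      have haΛ : a ∉ Λ := fun haΛ => hne.ne_empty (disjoint_self.1 (h a haΛ))
      refine hm' ⟨insert a Λ, by rw [Finset.card_insert_of_notMem haΛ, hΛ], ?_, ?_⟩
      · rw [Finset.coe_insert]
        exact Set.insert_subset ha hA
      · rw [Finset.coe_insert]
        exact hd.insert fun j hj _ => h j hj
    obtain ⟨x, hx1, hx2⟩ := Set.not_disjoint_iff.1 hla
    obtain ⟨t, ht, h1⟩ := (hDmem _ _).1 hx1
    obtain ⟨t', ht', h2⟩ := (hDmem _ _).1 hx2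
    refine Set.mem_add.2 ⟨l - c, by simpa using hl, _, hW t' ht' t ht, ?_⟩
    have h3 : a = l + (1 / 2 : ℝ) • t' - (1 / 2 : ℝ) • t := by rw [← h2, h1]; abel
    rw [h3, smul_sub]
    abel
  have h1 : coveringNumber A W ≤ (m : ℕ∞) := by
    have h0 : coveringNumber A W ≤ ((Λ.image fun x => x - c).card : ℕ∞) :=
      sInf_le ⟨_, rfl, hcov⟩
    refine h0.trans ?_
    rw [← hΛ]
    exact_mod_cast Finset.card_image_le
  calc (coveringNumber A W : ℝ≥0∞) ≤ ((m : ℕ∞) : ℝ≥0∞) := ENat.toENNReal_le.2 h1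
    _ = ENNReal.ofReal m := by simp
    _ ≤ ENNReal.ofReal R := ENNReal.ofReal_le_ofReal hmR

/-- Averaging `K ∩ (2c - K)` over `c` produces a symmetric body of large volume inside a translate
of `K`. The average of `|K ∩ (z - K)|` over `z ∈ 2K` is `2⁻ⁿ |K|`, which exceeds `4⁻ⁿ |K|` as
`n ≥ 1`. -/
lemma exists_symBody (hn : 1 ≤ n) {K : Set (Euc n)} (hK : IsConvexBody K) :
    ∃ c, SymBody {x | c + x ∈ K ∧ c - x ∈ K} ∧
      volume.real K ≤ 4 ^ n * volume.real {x | c + x ∈ K ∧ c - x ∈ K} := by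
  obtain ⟨hc, hk, hi⟩ := hK
  have hm : MeasurableSet K := hk.isClosed.measurableSet
  have hV0 : volume K ≠ 0 := ((isOpen_interior.measure_pos volume hi).trans_le
    (measure_mono interior_subset)).ne'
  have hVt : volume K ≠ ⊤ := hk.measure_lt_top.ne
  obtain ⟨c, hcv⟩ : ∃ c, volume K ≤ 4 ^ n * volume {x | c + x ∈ K ∧ c - x ∈ K} := by
    by_contra! h
    -- `∫ f z x dx` is the volume of `K ∩ (z - K)`, which for `z = 2c` is the symmetric body at `c`
    let f : Euc n → Euc n → ℝ≥0∞ := fun z x => K.indicator 1 x * K.indicator 1 (z - x)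
    have hf : Measurable (Function.uncurry f) := by
      have h1 : Measurable (K.indicator (1 : Euc n → ℝ≥0∞)) := measurable_one.indicator hm
      exact (h1.comp measurable_snd).mul (h1.comp (measurable_fst.sub measurable_snd))
    have e1 : ∫⁻ z, ∫⁻ x, f z x = volume K * volume K := by
      rw [lintegral_lintegral_swap hf.aemeasurable]
      have : ∀ x, ∫⁻ z, f z x = K.indicator 1 x * volume K := fun x => by
        simp only [f]
        have h1 : Measurable fun z : Euc n => K.indicator (1 : Euc n → ℝ≥0∞) (z - x) :=
          (measurable_one.indicator hm).comp (by fun_prop : Measurable fun z : Euc n => z - x)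
        rw [lintegral_const_mul _ h1,
          lintegral_sub_right_eq_self (fun z => K.indicator (1 : Euc n → ℝ≥0∞) z),
          lintegral_indicator_one hm]
      simp only [this]
      rw [lintegral_mul_const _ (measurable_one.indicator hm), lintegral_indicator_one hm]
    -- `K ∩ (z - K)` is empty unless `z ∈ 2K`
    have e2 : ∀ z, ∫⁻ x, f z x ≤ ((2 : ℝ) • K).indicator (fun _ => (4 ^ n)⁻¹ * volume K) z := by
      intro z
      by_cases hz : z ∈ (2 : ℝ) • K
      · rw [Set.indicator_of_mem hz]
        obtain ⟨c, -, rfl⟩ := Set.mem_smul_set.1 hz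
        have : ∫⁻ x, f ((2 : ℝ) • c) x = volume {x | c + x ∈ K ∧ c - x ∈ K} := by
          rw [← lintegral_add_right_eq_self _ c, ← lintegral_indicator_one]
          · refine lintegral_congr fun x => ?_
            simp only [f]
            rw [show (2 : ℝ) • c - (x + c) = c - x by rw [two_smul]; abel, add_comm x c]
            by_cases h1 : c + x ∈ K <;> by_cases h2 : c - x ∈ K <;> simp [h1, h2]
          · exact (hm.preimage (by fun_prop : Measurable fun x => c + x)).inter
              (hm.preimage (by fun_prop : Measurable fun x => c - x))
        rw [this, ← ENNReal.div_eq_inv_mul, ENNReal.le_div_iff_mul_le (by simp) (by simp), mul_comm]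
        exact (h c).le
      · rw [Set.indicator_of_notMem hz, nonpos_iff_eq_zero]
        have : ∀ x, f z x = 0 := fun x => by
          simp only [f]
          by_contra h0
          have h1 : x ∈ K := by by_contra h1; simp [h1] at h0
          have h2 : z - x ∈ K := by by_contra h2; simp [h2] at h0
          refine hz (Set.mem_smul_set.2 ⟨(1 / 2 : ℝ) • x + (1 / 2 : ℝ) • (z - x),
            hc h1 h2 (by norm_num) (by norm_num) (by norm_num), ?_⟩)
          rw [← smul_add, smul_smul]
          norm_num
        simp [this]
    have e3 : ∫⁻ z, ∫⁻ x, f z x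
        ≤ ∫⁻ z, ((2 : ℝ) • K).indicator (fun _ => (4 ^ n)⁻¹ * volume K) z := lintegral_mono e2
    rw [e1, lintegral_indicator_const (hm.const_smul₀ _), Measure.addHaar_smul,
      finrank_euclideanSpace, Fintype.card_fin, abs_of_nonneg (by positivity),
      ENNReal.ofReal_pow (by norm_num), ENNReal.ofReal_ofNat] at e3
    have e4 := ENNReal.toReal_mono (by finiteness) e3
    simp only [ENNReal.toReal_mul, ENNReal.toReal_inv, ENNReal.toReal_pow,
      ENNReal.toReal_ofNat] at e4
    have hp : 0 < (volume K).toReal := ENNReal.toReal_pos hV0 hVt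
    have h42 : (4 : ℝ) ^ n = 2 ^ n * 2 ^ n := by rw [← mul_pow]; norm_num
    have h2 : (1 : ℝ) < 2 ^ n := one_lt_pow₀ (by norm_num) (by omega)
    rw [h42] at e4
    have e5 : (volume K).toReal * (volume K).toReal * 2 ^ n
        ≤ (volume K).toReal * (volume K).toReal := by
      field_simp at e4 ⊢
      nlinarith
    nlinarith [mul_pos hp hp]
  refine ⟨c, ?_, ?_⟩
  · have hconv : Convex ℝ {x | c + x ∈ K ∧ c - x ∈ K} := by
      rintro x ⟨hx1, hx2⟩ y ⟨hy1, hy2⟩ s t hs ht hst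
      have hcc : c = s • c + t • c := by rw [← add_smul, hst, one_smul]
      constructor
      · have := hc hx1 hy1 hs ht hst
        have e : c + (s • x + t • y) = s • (c + x) + t • (c + y) := by
          nth_rw 1 [hcc]; simp only [smul_add]; abel
        rwa [e]
      · have := hc hx2 hy2 hs ht hst
        have e : c - (s • x + t • y) = s • (c - x) + t • (c - y) := by
          nth_rw 1 [hcc]; simp only [smul_sub]; abel
        rwa [e]
    have hcomp : IsCompact {x | c + x ∈ K ∧ c - x ∈ K} := by
      have h1 : IsCompact ((fun x => c + x) ⁻¹' K) := (Homeomorph.addLeft c).isCompact_preimage.2 hk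
      exact h1.inter_right (hk.isClosed.preimage (by fun_prop : Continuous fun x => c - x))
    refine ⟨hconv, hcomp, ?_, ?_⟩
    · rintro x ⟨h1, h2⟩
      exact ⟨by rwa [← sub_eq_add_neg], by rwa [sub_neg_eq_add]⟩
    · by_contra hne
      rw [Set.not_nonempty_iff_eq_empty] at hne
      have h0 := hconv.addHaar_frontier volume
      rw [hcomp.isClosed.frontier_eq, hne, Set.sdiff_empty] at h0
      rw [h0, mul_zero] at hcv
      exact hV0 (nonpos_iff_eq_zero.1 hcv)
  · have hfin : volume {x | c + x ∈ K ∧ c - x ∈ K} ≠ ⊤ := by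
      have : volume {x | c + x ∈ K ∧ c - x ∈ K} ≤ volume ((fun x => c + x) ⁻¹' K) :=
        measure_mono fun x hx => hx.1
      rw [measure_preimage_add] at this
      exact (this.trans_lt hVt.lt_top).ne
    have := ENNReal.toReal_mono (by finiteness) hcv
    simpa [ENNReal.toReal_mul, Measure.real] using this

/-- With `T = K₀ ∩ (b + E)`, where `K₀ = (K - c) ∩ (c - K)`, symmetry and convexity give
`½(T - T) ⊆ E` and `c + ½(T - T) ⊆ K`; the translates of `½T` by points of `K` (of `E`) lie in a
translate of `(3/2)K` (of `(3/2)E`). -/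
lemma covering_bounds (hn : 1 ≤ n) {K : Set (Euc n)} (hK : IsConvexBody K) :
    ∃ A : Matrix (Fin n) (Fin n) ℝ, A.PosDef ∧
      (coveringNumber K (ellipsoid A) : ℝ≥0∞)
        ≤ ENNReal.ofReal ((24 * Real.exp 5) ^ n) ∧
      (coveringNumber (ellipsoid A) K : ℝ≥0∞)
        ≤ ENNReal.ofReal ((24 * Real.exp 5) ^ n) := by
  obtain ⟨c, hS, hV⟩ := exists_symBody hn hK
  obtain ⟨hc, hk, hi⟩ := hK
  set K₀ := {x | c + x ∈ K ∧ c - x ∈ K}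
  obtain ⟨A, b, hA, hT, hE⟩ := hS.exists_ellipsoid hn
  set E := ellipsoid A
  set T := {x | x - b ∈ E} ∩ K₀
  obtain ⟨B, hB, hEB⟩ := ellipsoid_eq_preimage hA
  have hEB' : ∀ x, x ∈ E ↔ ‖clm B x‖ ≤ 1 := fun x => by
    rw [show E = _ from hEB, Set.mem_preimage, mem_closedBall_zero_iff]
  have hEc : Convex ℝ E := by
    rw [show E = _ from hEB]
    exact (convex_closedBall (0 : Euc n) 1).linear_preimage (clm B : Euc n →ₗ[ℝ] Euc n)
  have hEs : ∀ x ∈ E, -x ∈ E := fun x hx => by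
    rw [hEB'] at hx ⊢
    rwa [map_neg, norm_neg]
  have hEm : MeasurableSet E := by
    rw [show E = _ from hEB]
    exact (Metric.isClosed_closedBall.preimage (clm B).continuous).measurableSet
  have hEfin : volume E ≠ ⊤ := by
    intro h
    have h1 := volume_ellipsoid hA
    have h2 : 0 < volume.real (Metric.closedBall (0 : Euc n) 1) :=
      ENNReal.toReal_pos (Metric.measure_closedBall_pos _ _ one_pos).ne'
        measure_closedBall_lt_top.ne
    have h3 : 0 < √(A.det)⁻¹ := Real.sqrt_pos.2 (inv_pos.2 hA.det_pos)
    have h4 := mul_pos h3 h2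
    rw [← h1, Measure.real, show volume (ellipsoid A) = ⊤ from h] at h4
    simp at h4
  have hTm : MeasurableSet T :=
    (hEm.preimage (by fun_prop : Measurable fun x => x - b)).inter hS.meas
  set V := volume.real K₀
  have hV0 : 0 < V := hS.vol_pos
  have hT0 : 0 < volume.real T := lt_of_lt_of_le (by positivity) hT
  have hT' : V ≤ 2 * Real.exp 4 ^ n * volume.real T := by
    rw [Real.exp_neg] at hT
    rw [← Real.exp_nat_mul, mul_comm (n : ℝ) 4]
    have := Real.exp_pos (4 * n)
    field_simp at hT
    linarith
  have e5 : Real.exp 5 = Real.exp 4 * Real.exp 1 := by rw [← Real.exp_add]; norm_num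
  have he1 : 1 ≤ Real.exp 1 ^ n := one_le_pow₀ (Real.one_le_exp zero_le_one)
  have h2n : (2 : ℝ) ≤ 2 ^ n := by
    simpa using pow_le_pow_right₀ (one_le_two (α := ℝ)) hn
  have h4n : (4 : ℝ) ≤ 4 ^ n := by
    simpa using pow_le_pow_right₀ (by norm_num : (1 : ℝ) ≤ 4) hn
  have h23 : ∀ v : ℝ, 2 ^ n * ((3 / 2) ^ n * v) = 3 ^ n * v := fun v => by
    rw [← mul_assoc, ← mul_pow]; norm_num
  refine ⟨A, hA, ?_, ?_⟩
  · refine coveringNumber_le (T := T)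
      (B := (fun x => x + (1 / 2 : ℝ) • c) ⁻¹' ((3 / 2 : ℝ) • K)) 0 hTm hT0 ?_ ?_ ?_ ?_
    · rw [volume_homothet _ _ (by norm_num)]
      exact ENNReal.mul_ne_top ENNReal.ofReal_ne_top hk.measure_lt_top.ne
    · intro a ha t ht
      refine Set.mem_smul_set.2 ⟨(2 / 3 : ℝ) • a + (1 / 3 : ℝ) • (c + t),
        hc ha ht.2.1 (by norm_num) (by norm_num) (by norm_num), ?_⟩
      module
    · intro t ht t' ht'
      have := hEc ht.1 (hEs _ ht'.1) (by norm_num : (0 : ℝ) ≤ 1 / 2)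
        (by norm_num : (0 : ℝ) ≤ 1 / 2) (by norm_num)
      convert this using 1
      module
    · rw [Measure.real, volume_homothet _ _ (by norm_num), ENNReal.toReal_mul,
        ENNReal.toReal_ofReal (by positivity), h23]
      calc 3 ^ n * volume.real K ≤ 3 ^ n * (4 ^ n * (2 * Real.exp 4 ^ n * volume.real T)) := by
            gcongr; exact hV.trans (by gcongr)
        _ = 2 * 1 * (3 ^ n * 4 ^ n * Real.exp 4 ^ n * volume.real T) := by ring
        _ ≤ 2 ^ n * Real.exp 1 ^ n * (3 ^ n * 4 ^ n * Real.exp 4 ^ n * volume.real T) := by gcongr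
        _ = (2 * 3 * 4 * (Real.exp 4 * Real.exp 1)) ^ n * volume.real T := by
            simp only [mul_pow]; ring
        _ = _ := by rw [e5]; norm_num
  · refine coveringNumber_le (T := T)
      (B := (fun x => x + -((1 / 2 : ℝ) • b)) ⁻¹' ((3 / 2 : ℝ) • E)) c hTm hT0 ?_ ?_ ?_ ?_
    · rw [volume_homothet _ _ (by norm_num)]
      exact ENNReal.mul_ne_top ENNReal.ofReal_ne_top hEfin
    · intro a ha t ht
      refine Set.mem_smul_set.2 ⟨(2 / 3 : ℝ) • a + (1 / 3 : ℝ) • (t - b),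
        hEc ha ht.1 (by norm_num) (by norm_num) (by norm_num), ?_⟩
      module
    · intro t ht t' ht'
      have := (hS.convex ht.2 (hS.symm _ ht'.2) (by norm_num : (0 : ℝ) ≤ 1 / 2)
        (by norm_num : (0 : ℝ) ≤ 1 / 2) (by norm_num)).1
      convert this using 1
      module
    · rw [Measure.real, volume_homothet _ _ (by norm_num), ENNReal.toReal_mul,
        ENNReal.toReal_ofReal (by positivity), h23]
      calc 3 ^ n * volume.real E
          ≤ 3 ^ n * (2 * (2 * Real.exp 1) ^ n * (2 * Real.exp 4 ^ n * volume.real T)) := by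
            gcongr; exact hE.trans (by gcongr)
        _ = 4 * (3 ^ n * (2 * Real.exp 1) ^ n * Real.exp 4 ^ n * volume.real T) := by ring
        _ ≤ 4 ^ n * (3 ^ n * (2 * Real.exp 1) ^ n * Real.exp 4 ^ n * volume.real T) := by gcongr
        _ = (4 * 3 * 2 * (Real.exp 4 * Real.exp 1)) ^ n * volume.real T := by
            simp only [mul_pow]; ring
        _ = _ := by rw [e5]; norm_num

end MEll

theorem exists_M_ellipsoid :
    ∃ C > (0 : ℝ), ∃ n₀ : ℕ, ∀ n ≥ n₀, ∀ K : Set (Euc n), IsConvexBody K →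
      ∃ A : Matrix (Fin n) (Fin n) ℝ, A.PosDef ∧
        (coveringNumber K (ellipsoid A) : ℝ≥0∞) ≤ ENNReal.ofReal (C ^ n) ∧
        (coveringNumber (ellipsoid A) K : ℝ≥0∞) ≤ ENNReal.ofReal (C ^ n) :=
  ⟨24 * Real.exp 5, by positivity, 1, fun _ hn _ hK => MEll.covering_bounds hn hK⟩

end
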